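/- arXiv:2602.17629 — 8 statements merged into one kernel-verified Lean document; each statement's English description precedes it below -/
import Mathlib

section
/- Let b > 0 and let ρ₁, ρ₂ : (0,b) → ℝ be continuously differentiable functions such that (1) ρ₁'(t) + ρ₁(t)² ≤ ρ₂'(t) + ρ₂(t)² for every t ∈ (0,b), and (2) lim_{t→0⁺} (ρᵢ(t) − 1/t) = 0 for i ∈ {1,2}. Then ρ₂(t) ≥ ρ₁(t) for every t ∈ (0,b). -/
open Set Filter Topology

/-!
The difference `w = ρ₂ - ρ₁` satisfies the linear inequality `w' + (ρ₁ + ρ₂) * w ≥ 0`, so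
`w * exp F` is nondecreasing whenever `F' = ρ₁ + ρ₂`. As `ρ₁ + ρ₂` is bounded below near the left
endpoint, `F` is bounded above there. Hence a negative value of `w` at some point would keep `w`
below a negative constant all the way down to the left endpoint.
-/

theorem exists_hasDerivAt_of_continuousOn {E : Type*} [NormedAddCommGroup E] [NormedSpace ℝ E]
    [CompleteSpace E] {D : Set ℝ} (hDo : IsOpen D) (hDc : D.OrdConnected) {f : ℝ → E}
    (hf : ContinuousOn f D) : ∃ F : ℝ → E, ∀ t ∈ D, HasDerivAt F (f t) t := by
  rcases D.eq_empty_or_nonempty with rfl | ⟨c, hc⟩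
  · simp
  · exact ⟨fun t ↦ ∫ x in c..t, f x, fun t ht ↦ intervalIntegral.integral_hasDerivAt_right
      (hf.mono (hDc.uIcc_subset hc ht)).intervalIntegrable
      (hf.stronglyMeasurableAtFilter hDo t ht) (hf.continuousAt (hDo.mem_nhds ht))⟩

theorem isBoundedUnder_le_nhdsGT_of_hasDerivAt {a : ℝ} {F s : ℝ → ℝ}
    (hF : ∀ᶠ t in 𝓝[>] a, HasDerivAt F (s t) t) (hs : IsBoundedUnder (· ≥ ·) (𝓝[>] a) s) :
    IsBoundedUnder (· ≤ ·) (𝓝[>] a) F := by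
  obtain ⟨m, hm⟩ := hs.eventually_ge
  obtain ⟨d, had, hd⟩ := mem_nhdsGT_iff_exists_Ioc_subset.1 (hF.and hm)
  have hderiv : ∀ t ∈ Ioc a d, HasDerivAt F (s t) t := fun t ht ↦ (hd ht).1
  have hle : ∀ t ∈ Ioc a d, F t ≤ F d - m * (d - t) := fun t ht ↦ by
    have hmvt := (convex_Ioc a d).mul_sub_le_image_sub_of_le_deriv
      (fun x hx ↦ (hderiv x hx).continuousAt.continuousWithinAt)
      (fun x hx ↦ (hderiv x (interior_subset hx)).differentiableAt.differentiableWithinAt)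
      (fun x hx ↦ (hderiv x (interior_subset hx)).deriv ▸ (hd (interior_subset hx)).2)
      t ht d (right_mem_Ioc.2 had) ht.2
    linarith
  have hbound : IsBoundedUnder (· ≤ ·) (𝓝[>] a) fun t ↦ F d - m * (d - t) :=
    (Continuous.tendsto (by fun_prop) a |>.mono_left nhdsWithin_le_nhds).isBoundedUnder_le
  exact hbound.mono_le (eventually_of_mem (Ioc_mem_nhdsGT had) hle)

theorem monotoneOn_mul_exp_of_deriv_add_mul_nonneg {D : Set ℝ} (hD : Convex ℝ D)
    {w w' s F : ℝ → ℝ} (hw : ∀ t ∈ D, HasDerivWithinAt w (w' t) D t)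
    (hF : ∀ t ∈ D, HasDerivWithinAt F (s t) D t)
    (h : ∀ t ∈ interior D, 0 ≤ w' t + s t * w t) : MonotoneOn (fun t ↦ w t * Real.exp (F t)) D := by
  have hderiv : ∀ t ∈ D, HasDerivWithinAt (fun t ↦ w t * Real.exp (F t))
      ((w' t + s t * w t) * Real.exp (F t)) D t := fun t ht ↦
    ((hw t ht).mul (hF t ht).exp).congr_deriv (by ring)
  exact monotoneOn_of_hasDerivWithinAt_nonneg hD
    (fun t ht ↦ (hderiv t ht).continuousWithinAt)
    (fun t ht ↦ (hderiv t (interior_subset ht)).mono interior_subset)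
    (fun t ht ↦ mul_nonneg (h t ht) (Real.exp_pos _).le)

/-- The hypothesis `hw` is `limsup w ≥ 0` at `a`, phrased without `limsup` because the latter takes
a junk value when `w` is unbounded near `a`. -/
theorem nonneg_of_monotoneOn_mul_exp {a b : ℝ} {w F : ℝ → ℝ}
    (hmono : MonotoneOn (fun t ↦ w t * Real.exp (F t)) (Ioo a b))
    (hF : IsBoundedUnder (· ≤ ·) (𝓝[>] a) F) (hw : ∀ ε < 0, ∃ᶠ t in 𝓝[>] a, ε < w t) :
    ∀ t ∈ Ioo a b, 0 ≤ w t := by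
  intro c hc
  by_contra! hneg
  obtain ⟨M, hM⟩ := hF.eventually_le
  have hlt : w c * Real.exp (F c - M) < 0 := mul_neg_of_neg_of_pos hneg (Real.exp_pos _)
  obtain ⟨t, hwt, hFt, htc⟩ := ((hw _ hlt).and_eventually (hM.and (Ioo_mem_nhdsGT hc.1))).exists
  refine hwt.not_ge ?_
  calc w t = w t * Real.exp (F t) * Real.exp (-F t) := by
        rw [mul_assoc, ← Real.exp_add, add_neg_cancel, Real.exp_zero, mul_one]
    _ ≤ w c * Real.exp (F c) * Real.exp (-F t) :=
        mul_le_mul_of_nonneg_right (hmono ⟨htc.1, htc.2.trans hc.2⟩ hc htc.2.le)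
          (Real.exp_pos _).le
    _ = w c * Real.exp (F c - F t) := by rw [mul_assoc, ← Real.exp_add, ← sub_eq_add_neg]
    _ ≤ w c * Real.exp (F c - M) := mul_le_mul_of_nonpos_left (by gcongr) hneg.le

theorem nonneg_of_deriv_add_mul_nonneg {a b : ℝ} {w w' s : ℝ → ℝ}
    (hw : ∀ t ∈ Ioo a b, HasDerivAt w (w' t) t) (hs : ContinuousOn s (Ioo a b))
    (h : ∀ t ∈ Ioo a b, 0 ≤ w' t + s t * w t) (hs_bdd : IsBoundedUnder (· ≥ ·) (𝓝[>] a) s)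
    (hw_freq : ∀ ε < 0, ∃ᶠ t in 𝓝[>] a, ε < w t) : ∀ t ∈ Ioo a b, 0 ≤ w t := by
  intro c hc
  obtain ⟨F, hF⟩ := exists_hasDerivAt_of_continuousOn isOpen_Ioo ordConnected_Ioo hs
  have hF_bdd : IsBoundedUnder (· ≤ ·) (𝓝[>] a) F :=
    isBoundedUnder_le_nhdsGT_of_hasDerivAt
      (eventually_of_mem (Ioo_mem_nhdsGT (hc.1.trans hc.2)) hF) hs_bdd
  have hmono : MonotoneOn (fun t ↦ w t * Real.exp (F t)) (Ioo a b) :=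
    monotoneOn_mul_exp_of_deriv_add_mul_nonneg (convex_Ioo a b)
      (fun t ht ↦ (hw t ht).hasDerivWithinAt) (fun t ht ↦ (hF t ht).hasDerivWithinAt)
      (fun t ht ↦ h t (interior_subset ht))
  exact nonneg_of_monotoneOn_mul_exp hmono hF_bdd hw_freq c hc

section OneDiv

variable {𝕜 : Type*} [Field 𝕜] [LinearOrder 𝕜] [IsStrictOrderedRing 𝕜] [TopologicalSpace 𝕜]
  [OrderTopology 𝕜]

theorem tendsto_nhdsGT_zero_atTop_of_sub_one_div {ρ : 𝕜 → 𝕜} {l : 𝕜}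
    (h : Tendsto (fun t ↦ ρ t - 1 / t) (𝓝[>] 0) (𝓝 l)) : Tendsto ρ (𝓝[>] 0) atTop := by
  simpa only [one_div, sub_add_cancel] using h.add_atTop tendsto_inv_nhdsGT_zero

theorem isBoundedUnder_ge_add_of_tendsto_sub_one_div {ρ₁ ρ₂ : 𝕜 → 𝕜} {l₁ l₂ : 𝕜}
    (h₁ : Tendsto (fun t ↦ ρ₁ t - 1 / t) (𝓝[>] 0) (𝓝 l₁))
    (h₂ : Tendsto (fun t ↦ ρ₂ t - 1 / t) (𝓝[>] 0) (𝓝 l₂)) :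
    IsBoundedUnder (· ≥ ·) (𝓝[>] 0) fun t ↦ ρ₁ t + ρ₂ t :=
  isBoundedUnder_of_eventually_ge <|
    ((tendsto_nhdsGT_zero_atTop_of_sub_one_div h₁).atTop_add_atTop
      (tendsto_nhdsGT_zero_atTop_of_sub_one_div h₂)).eventually_ge_atTop 0

end OneDiv

theorem frequently_lt_sub_of_tendsto_sub {α : Type*} {f : Filter α} [f.NeBot] {u v g : α → ℝ}
    {l : ℝ} (hu : Tendsto (fun x ↦ u x - g x) f (𝓝 l)) (hv : Tendsto (fun x ↦ v x - g x) f (𝓝 l)) :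
    ∀ ε < 0, ∃ᶠ x in f, ε < v x - u x := fun ε hε ↦ by
  have hvu : Tendsto (fun x ↦ v x - u x) f (𝓝 0) := by
    simpa only [sub_sub_sub_cancel_right, sub_self] using hv.sub hu
  exact (hvu.eventually (lt_mem_nhds hε)).frequently

theorem riccati_comparison_general {a b : ℝ} {ρ₁ ρ₂ ρ₁' ρ₂' : ℝ → ℝ}
    (hd₁ : ∀ t ∈ Ioo a b, HasDerivAt ρ₁ (ρ₁' t) t) (hd₂ : ∀ t ∈ Ioo a b, HasDerivAt ρ₂ (ρ₂' t) t)
    (hineq : ∀ t ∈ Ioo a b, ρ₁' t + ρ₁ t ^ 2 ≤ ρ₂' t + ρ₂ t ^ 2)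
    (hsum : IsBoundedUnder (· ≥ ·) (𝓝[>] a) fun t ↦ ρ₁ t + ρ₂ t)
    (hdiff : ∀ ε < 0, ∃ᶠ t in 𝓝[>] a, ε < ρ₂ t - ρ₁ t) :
    ∀ t ∈ Ioo a b, ρ₁ t ≤ ρ₂ t := by
  have hcont : ContinuousOn (fun t ↦ ρ₁ t + ρ₂ t) (Ioo a b) := fun t ht ↦
    ((hd₁ t ht).continuousAt.add (hd₂ t ht).continuousAt).continuousWithinAt
  have hlin : ∀ t ∈ Ioo a b, 0 ≤ (ρ₂' t - ρ₁' t) + (ρ₁ t + ρ₂ t) * (ρ₂ t - ρ₁ t) := fun t ht ↦ by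
    linear_combination hineq t ht
  exact fun t ht ↦ sub_nonneg.1 <| nonneg_of_deriv_add_mul_nonneg
    (fun t ht ↦ (hd₂ t ht).sub (hd₁ t ht)) hcont hlin hsum hdiff t ht

/-- **Riccati comparison principle.** If `ρ₁, ρ₂ : (0,b) → ℝ` are `C¹` with
`ρ₁' + ρ₁² ≤ ρ₂' + ρ₂²` on `(0,b)` and both behave like `1/t` as `t → 0⁺`,
then `ρ₁ ≤ ρ₂` on `(0,b)`. -/
theorem riccati_comparison
    (b : ℝ) (hb : 0 < b)
    (ρ₁ ρ₂ ρ₁' ρ₂' : ℝ → ℝ)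
    (hd₁ : ∀ t ∈ Ioo (0:ℝ) b, HasDerivAt ρ₁ (ρ₁' t) t)
    (hd₂ : ∀ t ∈ Ioo (0:ℝ) b, HasDerivAt ρ₂ (ρ₂' t) t)
    (hc₁ : ContinuousOn ρ₁' (Ioo (0:ℝ) b))
    (hc₂ : ContinuousOn ρ₂' (Ioo (0:ℝ) b))
    (hineq : ∀ t ∈ Ioo (0:ℝ) b, ρ₁' t + (ρ₁ t) ^ 2 ≤ ρ₂' t + (ρ₂ t) ^ 2)
    (hlim₁ : Tendsto (fun t => ρ₁ t - 1 / t) (𝓝[>] (0:ℝ)) (𝓝 0))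
    (hlim₂ : Tendsto (fun t => ρ₂ t - 1 / t) (𝓝[>] (0:ℝ)) (𝓝 0)) :
    ∀ t ∈ Ioo (0:ℝ) b, ρ₁ t ≤ ρ₂ t :=
  riccati_comparison_general hd₁ hd₂ hineq
    (isBoundedUnder_ge_add_of_tendsto_sub_one_div hlim₁ hlim₂)
    (frequently_lt_sub_of_tendsto_sub hlim₁ hlim₂)
end

section
/- Let b > 0 and let ρ₁, ρ₂ : (0,b) → ℝ be locally Lipschitz functions such that ρ₁'(t) + ρ₁(t)² ≤ ρ₂'(t) + ρ₂(t)² for almost every t ∈ (0,b) (the derivatives existing almost everywhere by Rademacher's theorem), and lim_{t→0⁺} (ρᵢ(t) − 1/t) = 0 for i ∈ {1,2}. Then ρ₂(t) ≥ ρ₁(t) for every t ∈ (0,b). -/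
open Set Filter Topology MeasureTheory

/-!
The difference `u = ρ₂ - ρ₁` and the sum `s = ρ₁ + ρ₂` satisfy `0 ≤ u' + s * u` almost everywhere,
so that `exp (∫ s) * u` is nondecreasing and `u x ≤ exp (∫ x..t, s) * u t` for `x ≤ t`. Since `s`
is bounded below near the singular endpoint, the exponential factor stays away from `0` as `x`
approaches that endpoint. If `u t` were negative, then `u` would remain below a negative constant
there, whereas it tends to `0`.
-/

section Gronwall

variable {X Y : Type*} [PseudoMetricSpace X] [PseudoMetricSpace Y] {u s : ℝ → ℝ} {a b t : ℝ}

lemma absolutelyContinuousOnInterval_comp_of_lipschitzOnWith {f : ℝ → X} {g : X → Y} {K : NNReal}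
    (hg : LipschitzOnWith K g (f '' uIcc a b)) (hf : AbsolutelyContinuousOnInterval f a b) :
    AbsolutelyContinuousOnInterval (g ∘ f) a b := by
  have hbound : Tendsto (fun E : ℕ × (ℕ → ℝ × ℝ) ↦
      K * ∑ i ∈ Finset.range E.1, dist (f (E.2 i).1) (f (E.2 i).2))
      (AbsolutelyContinuousOnInterval.totalLengthFilter ⊓
        𝓟 (AbsolutelyContinuousOnInterval.disjWithin a b)) (𝓝 0) := by
    simpa only [mul_zero] using Filter.Tendsto.const_mul (K : ℝ) hf
  refine squeeze_zero' (Eventually.of_forall fun _ ↦ Finset.sum_nonneg fun _ _ ↦ dist_nonneg)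
    ?_ hbound
  filter_upwards [mem_inf_of_right (mem_principal_self _)] with E hE
  rw [Finset.mul_sum]
  exact Finset.sum_le_sum fun i hi ↦
    hg.dist_le_mul _ (mem_image_of_mem f (hE.1 i hi).1) _ (mem_image_of_mem f (hE.1 i hi).2)

lemma absolutelyContinuousOnInterval_comp_of_locallyLipschitzOn {F : Type*}
    [SeminormedAddCommGroup F] {f : ℝ → F} {g : F → Y}
    (hg : LocallyLipschitzOn (f '' uIcc a b) g) (hf : AbsolutelyContinuousOnInterval f a b) :
    AbsolutelyContinuousOnInterval (g ∘ f) a b := by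
  obtain ⟨K, hK⟩ :=
    hg.exists_lipschitzOnWith_of_compact (isCompact_uIcc.image_of_continuousOn hf.continuousOn)
  exact absolutelyContinuousOnInterval_comp_of_lipschitzOnWith hK hf

lemma le_of_ae_deriv_nonneg (hab : a ≤ b) (hu : AbsolutelyContinuousOnInterval u a b)
    (hderiv : ∀ᵐ x, x ∈ Icc a b → 0 ≤ deriv u x) : u a ≤ u b := by
  rw [← sub_nonneg, ← hu.integral_deriv_eq_sub]
  exact intervalIntegral.integral_nonneg_of_ae_restrict hab
    ((ae_restrict_iff' measurableSet_Icc).2 hderiv)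

lemma le_exp_integral_mul_of_ae_deriv_add_mul_nonneg (hab : a ≤ b)
    (hu : AbsolutelyContinuousOnInterval u a b) (hs : IntervalIntegrable s volume a b)
    (hderiv : ∀ᵐ x, x ∈ Icc a b → 0 ≤ deriv u x + s x * u x) :
    u a ≤ Real.exp (∫ x in a..b, s x) * u b := by
  have hfactor : AbsolutelyContinuousOnInterval (fun x ↦ Real.exp (∫ y in a..x, s y)) a b :=
    absolutelyContinuousOnInterval_comp_of_locallyLipschitzOn (g := Real.exp)
      Real.contDiff_exp.locallyLipschitz.locallyLipschitzOn
      (hs.absolutelyContinuousOnInterval_intervalIntegral left_mem_uIcc)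
  have hmono := le_of_ae_deriv_nonneg hab (hfactor.fun_mul hu) <| by
    filter_upwards [hderiv, hu.ae_differentiableAt, hs.ae_hasDerivAt_integral]
      with x hx hux hsx hxab
    have hxab' : x ∈ uIcc a b := Icc_subset_uIcc hxab
    rw [((hsx hxab' a left_mem_uIcc).exp.fun_mul (hux hxab').hasDerivAt).deriv, mul_assoc,
      ← mul_add, add_comm]
    exact mul_nonneg (Real.exp_pos _).le (hx hxab)
  simpa only [intervalIntegral.integral_same, Real.exp_zero, one_mul] using hmono

lemma isBoundedUnder_ge_intervalIntegral_nhdsGT (hat : a < t)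
    (hs : ∀ x ∈ Ioo a t, IntervalIntegrable s volume x t)
    (hbdd : IsBoundedUnder (· ≥ ·) (𝓝[>] a) s) :
    IsBoundedUnder (· ≥ ·) (𝓝[>] a) fun x ↦ ∫ y in x..t, s y := by
  obtain ⟨C, hC⟩ := hbdd.eventually_ge
  obtain ⟨r, hr, hCr⟩ := mem_nhdsGT_iff_exists_Ioo_subset.1 hC
  obtain ⟨c, hac, hc⟩ := exists_between (lt_min hr hat)
  have hct : c < t := hc.trans_le (min_le_right _ _)
  refine isBoundedUnder_of_eventually_ge (a := -|C| * (c - a) + ∫ y in c..t, s y) ?_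
  filter_upwards [Ioo_mem_nhdsGT hac] with x hx
  have hxc : IntervalIntegrable s volume x c :=
    (hs x ⟨hx.1, hx.2.trans hct⟩).trans (hs c ⟨hac, hct⟩).symm
  have hCs : ∀ y ∈ Icc x c, -|C| ≤ s y := fun y hy ↦ (neg_abs_le C).trans
    (hCr ⟨hx.1.trans_le hy.1, hy.2.trans_lt (hc.trans_le (min_le_left _ _))⟩)
  rw [← intervalIntegral.integral_add_adjacent_intervals hxc (hs c ⟨hac, hct⟩)]
  gcongr
  calc -|C| * (c - a)
      ≤ -|C| * (c - x) :=
        mul_le_mul_of_nonpos_left (by linarith [hx.1]) (neg_nonpos.2 (abs_nonneg C))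
    _ = ∫ _ in x..c, -|C| := by rw [intervalIntegral.integral_const, smul_eq_mul, mul_comm]
    _ ≤ ∫ y in x..c, s y :=
        intervalIntegral.integral_mono_on hx.2.le intervalIntegrable_const hxc hCs

end Gronwall

lemma locallyLipschitzOn_of_forall_exists_mem_nhds {X Y : Type*} [PseudoEMetricSpace X]
    [PseudoEMetricSpace Y] {f : X → Y} {s : Set X}
    (hf : ∀ x ∈ s, ∃ v ∈ 𝓝 x, ∃ K, LipschitzOnWith K f v) : LocallyLipschitzOn s f := by
  intro x hx
  obtain ⟨v, hv, K, hK⟩ := hf x hx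
  exact ⟨K, v, mem_nhdsWithin_of_mem_nhds hv, hK⟩

/-- Local absolute continuity on `s`, meaning absolute continuity on every segment with endpoints
in `s`. It is intended for intervals `s`, where these segments are the compact subintervals. -/
def LocallyAbsolutelyContinuousOn {X : Type*} [PseudoMetricSpace X] (f : ℝ → X) (s : Set ℝ) :
    Prop :=
  ∀ x ∈ s, ∀ y ∈ s, AbsolutelyContinuousOnInterval f x y

namespace LocallyAbsolutelyContinuousOn

lemma of_locallyLipschitzOn {X : Type*} [PseudoMetricSpace X] {f : ℝ → X} {s : Set ℝ}
    (hs : s.OrdConnected) (hf : LocallyLipschitzOn s f) : LocallyAbsolutelyContinuousOn f s := by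
  intro x hx y hy
  obtain ⟨K, hK⟩ := (hf.mono (hs.uIcc_subset hx hy)).exists_lipschitzOnWith_of_compact
    isCompact_uIcc
  exact hK.absolutelyContinuousOnInterval

lemma ae_differentiableAt {f : ℝ → ℝ} {s : Set ℝ} (hf : LocallyAbsolutelyContinuousOn f s) :
    ∀ᵐ x, x ∈ s → DifferentiableAt ℝ f x := by
  refine ae_of_mem_of_ae_of_mem_inter_Ioo fun x y hx hy _ ↦ ?_
  filter_upwards [(hf x hx y hy).ae_differentiableAt] with z hz hzs
  exact hz (Icc_subset_uIcc (Ioo_subset_Icc_self hzs.2))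

end LocallyAbsolutelyContinuousOn

-- `hlimsup` says that the upper limit of `u` at `a` is nonnegative, avoiding the junk value of
-- `limsup` for unbounded functions.
lemma nonneg_of_ae_deriv_add_mul_nonneg {u s : ℝ → ℝ} {a b : ℝ}
    (hu : LocallyAbsolutelyContinuousOn u (Ioo a b))
    (hs : ∀ x ∈ Ioo a b, ∀ y ∈ Ioo a b, IntervalIntegrable s volume x y)
    (hderiv : ∀ᵐ x, x ∈ Ioo a b → 0 ≤ deriv u x + s x * u x)
    (hbdd : IsBoundedUnder (· ≥ ·) (𝓝[>] a) s)
    (hlimsup : ∀ ε < 0, ∃ᶠ x in 𝓝[>] a, ε < u x) :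
    ∀ t ∈ Ioo a b, 0 ≤ u t := by
  intro t ht
  by_contra! hneg
  obtain ⟨M, hM⟩ := (isBoundedUnder_ge_intervalIntegral_nhdsGT ht.1
    (fun x hx ↦ hs x ⟨hx.1, hx.2.trans ht.2⟩ t ht) hbdd).eventually_ge
  have hupper : ∀ᶠ x in 𝓝[>] a, u x ≤ Real.exp M * u t := by
    filter_upwards [hM, Ioo_mem_nhdsGT ht.1] with x hMx hx
    have hxb : x ∈ Ioo a b := ⟨hx.1, hx.2.trans ht.2⟩
    calc u x
        ≤ Real.exp (∫ y in x..t, s y) * u t :=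
          le_exp_integral_mul_of_ae_deriv_add_mul_nonneg hx.2.le (hu x hxb t ht) (hs x hxb t ht)
            (hderiv.mono fun y hy hyxt ↦ hy (Icc_subset_Ioo hx.1 ht.2 hyxt))
      _ ≤ Real.exp M * u t :=
          mul_le_mul_of_nonpos_right (Real.exp_le_exp.2 hMx) hneg.le
  have hlower : ∃ᶠ x in 𝓝[>] a, Real.exp M * u t < u x :=
    hlimsup _ (mul_neg_of_pos_of_neg (Real.exp_pos M) hneg)
  obtain ⟨x, hlt, hle⟩ := (hlower.and_eventually hupper).exists
  exact hlt.not_ge hle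

lemma tendsto_atTop_of_tendsto_sub_one_div {ρ : ℝ → ℝ} {c : ℝ}
    (hρ : Tendsto (fun t ↦ ρ t - 1 / t) (𝓝[>] 0) (𝓝 c)) : Tendsto ρ (𝓝[>] 0) atTop := by
  simpa only [one_div, sub_add_cancel] using hρ.add_atTop tendsto_inv_nhdsGT_zero

theorem riccati_comparison_locallyLipschitz_general {a b : ℝ} {ρ₁ ρ₂ : ℝ → ℝ}
    (hac₁ : LocallyAbsolutelyContinuousOn ρ₁ (Ioo a b))
    (hac₂ : LocallyAbsolutelyContinuousOn ρ₂ (Ioo a b))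
    (hineq : ∀ᵐ t, t ∈ Ioo a b → deriv ρ₁ t + ρ₁ t ^ 2 ≤ deriv ρ₂ t + ρ₂ t ^ 2)
    (hbdd : IsBoundedUnder (· ≥ ·) (𝓝[>] a) fun t ↦ ρ₁ t + ρ₂ t)
    (hlimsup : ∀ ε < 0, ∃ᶠ t in 𝓝[>] a, ε < ρ₂ t - ρ₁ t) :
    ∀ t ∈ Ioo a b, ρ₁ t ≤ ρ₂ t := by
  have hderiv : ∀ᵐ t, t ∈ Ioo a b →
      0 ≤ deriv (ρ₂ - ρ₁) t + (ρ₁ t + ρ₂ t) * (ρ₂ - ρ₁) t := by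
    filter_upwards [hineq, hac₁.ae_differentiableAt, hac₂.ae_differentiableAt] with t ht h₁ h₂ htab
    rw [deriv_sub (h₂ htab) (h₁ htab), Pi.sub_apply]
    linarith [ht htab]
  intro t ht
  exact sub_nonneg.1 <| nonneg_of_ae_deriv_add_mul_nonneg
    (fun x hx y hy ↦ (hac₂ x hx y hy).sub (hac₁ x hx y hy))
    (fun x hx y hy ↦
      ((hac₁ x hx y hy).continuousOn.add (hac₂ x hx y hy).continuousOn).intervalIntegrable)
    hderiv hbdd hlimsup t ht

/-- **Riccati comparison principle, locally Lipschitz version.** If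
`ρ₁, ρ₂ : (0,b) → ℝ` are locally Lipschitz (hence differentiable almost
everywhere by Rademacher's theorem), satisfy `ρ₁' + ρ₁² ≤ ρ₂' + ρ₂²` for almost
every `t ∈ (0,b)`, and both behave like `1/t` as `t → 0⁺`, then `ρ₁ ≤ ρ₂` on
`(0,b)`. -/
theorem riccati_comparison_locallyLipschitz
    (b : ℝ) (hb : 0 < b)
    (ρ₁ ρ₂ : ℝ → ℝ)
    (hlip₁ : ∀ t ∈ Ioo (0:ℝ) b, ∃ s ∈ 𝓝 t, ∃ K, LipschitzOnWith K ρ₁ s)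
    (hlip₂ : ∀ t ∈ Ioo (0:ℝ) b, ∃ s ∈ 𝓝 t, ∃ K, LipschitzOnWith K ρ₂ s)
    (hineq : ∀ᵐ t ∂(volume : Measure ℝ), t ∈ Ioo (0:ℝ) b →
      deriv ρ₁ t + (ρ₁ t) ^ 2 ≤ deriv ρ₂ t + (ρ₂ t) ^ 2)
    (hlim₁ : Tendsto (fun t => ρ₁ t - 1 / t) (𝓝[>] (0:ℝ)) (𝓝 0))
    (hlim₂ : Tendsto (fun t => ρ₂ t - 1 / t) (𝓝[>] (0:ℝ)) (𝓝 0)) :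
    ∀ t ∈ Ioo (0:ℝ) b, ρ₁ t ≤ ρ₂ t := by
  have hdiff : Tendsto (fun t ↦ ρ₂ t - ρ₁ t) (𝓝[>] 0) (𝓝 0) := by
    simpa only [sub_sub_sub_cancel_right, sub_zero] using hlim₂.sub hlim₁
  exact riccati_comparison_locallyLipschitz_general
    (.of_locallyLipschitzOn ordConnected_Ioo
      (locallyLipschitzOn_of_forall_exists_mem_nhds hlip₁))
    (.of_locallyLipschitzOn ordConnected_Ioo
      (locallyLipschitzOn_of_forall_exists_mem_nhds hlip₂)) hineq
    ((tendsto_atTop_of_tendsto_sub_one_div hlim₁).atTop_add_atTop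
      (tendsto_atTop_of_tendsto_sub_one_div hlim₂)).isBoundedUnder_ge_atTop
    fun ε hε ↦ (hdiff.eventually_const_lt hε).frequently
end

section
/- Let b > 0, let ρ₁, ρ₂ : (0,b) → ℝ be continuously differentiable with ρ₁'(t) + ρ₁(t)² ≤ ρ₂'(t) + ρ₂(t)² for every t ∈ (0,b), fix t₀ ∈ (0,b), and define f(t) = ∫_{t₀}^{t} (ρ₁(τ) + ρ₂(τ)) dτ. Then the function t ↦ (ρ₂(t) − ρ₁(t)) e^{f(t)} is nondecreasing on (0,b); in particular, ρ₂(t₂) − ρ₁(t₂) ≥ (ρ₂(t₁) − ρ₁(t₁)) e^{f(t₁) − f(t₂)} for all 0 < t₁ < t₂ < b. -/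
open Set Filter Topology intervalIntegral

/-!
Put `u = ρ₂ - ρ₁`. Since `ρ₂² - ρ₁² = (ρ₁ + ρ₂) u`, the Riccati inequality is the linear
differential inequality `0 ≤ u' + (ρ₁ + ρ₂) u`, for which the exponential of an antiderivative of
`ρ₁ + ρ₂` is an integrating factor.
-/

theorem hasDerivAt_of_eqOn_integral {E : Type*} [NormedAddCommGroup E] [NormedSpace ℝ E]
    [CompleteSpace E] {s : Set ℝ} {f g : ℝ → E} {t₀ t : ℝ} (hs : IsOpen s) (hs' : s.OrdConnected)
    (hg : ContinuousOn g s) (ht₀ : t₀ ∈ s) (hf : EqOn f (fun t => ∫ τ in t₀..t, g τ) s)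
    (ht : t ∈ s) : HasDerivAt f (g t) t := by
  have hint : IntervalIntegrable g MeasureTheory.volume t₀ t :=
    (hg.mono (hs'.uIcc_subset ht₀ ht)).intervalIntegrable
  exact (integral_hasDerivAt_right hint (hg.stronglyMeasurableAtFilter hs t ht)
    (hg.continuousAt (hs.mem_nhds ht))).congr_of_eventuallyEq
      (hf.eventuallyEq_of_mem (hs.mem_nhds ht))

theorem mul_exp_sub_le_iff {x y a b : ℝ} :
    x * Real.exp (a - b) ≤ y ↔ x * Real.exp a ≤ y * Real.exp b := by
  rw [Real.exp_sub, ← mul_div_assoc, div_le_iff₀ (Real.exp_pos b)]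

section

variable {D : Set ℝ} {f : ℝ → ℝ}

theorem monotoneOn_mul_exp_of_deriv_add_mul_nonneg_s3 {u u' f' : ℝ → ℝ} (hD : Convex ℝ D)
    (hu : ContinuousOn u D) (hf : ContinuousOn f D)
    (hu' : ∀ t ∈ interior D, HasDerivAt u (u' t) t)
    (hf' : ∀ t ∈ interior D, HasDerivAt f (f' t) t)
    (hnonneg : ∀ t ∈ interior D, 0 ≤ u' t + f' t * u t) :
    MonotoneOn (fun t => u t * Real.exp (f t)) D := by
  have hderiv : ∀ t ∈ interior D, HasDerivAt (fun t => u t * Real.exp (f t))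
      ((u' t + f' t * u t) * Real.exp (f t)) t := fun t ht =>
    ((hu' t ht).mul (hf' t ht).exp).congr_deriv (by ring)
  exact monotoneOn_of_hasDerivWithinAt_nonneg hD (hu.mul hf.rexp)
    (fun t ht => (hderiv t ht).hasDerivWithinAt)
    (fun t ht => mul_nonneg (hnonneg t ht) (Real.exp_pos (f t)).le)

theorem monotoneOn_sub_mul_exp_of_riccati_le {ρ₁ ρ₂ ρ₁' ρ₂' : ℝ → ℝ} (hD : Convex ℝ D)
    (hρ₁ : ContinuousOn ρ₁ D) (hρ₂ : ContinuousOn ρ₂ D) (hf : ContinuousOn f D)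
    (hρ₁' : ∀ t ∈ interior D, HasDerivAt ρ₁ (ρ₁' t) t)
    (hρ₂' : ∀ t ∈ interior D, HasDerivAt ρ₂ (ρ₂' t) t)
    (hf' : ∀ t ∈ interior D, HasDerivAt f (ρ₁ t + ρ₂ t) t)
    (hriccati : ∀ t ∈ interior D, ρ₁' t + ρ₁ t ^ 2 ≤ ρ₂' t + ρ₂ t ^ 2) :
    MonotoneOn (fun t => (ρ₂ t - ρ₁ t) * Real.exp (f t)) D := by
  refine monotoneOn_mul_exp_of_deriv_add_mul_nonneg_s3 hD (hρ₂.sub hρ₁) hf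
    (fun t ht => (hρ₂' t ht).sub (hρ₁' t ht)) hf' fun t ht => ?_
  calc
    0 ≤ (ρ₂' t + ρ₂ t ^ 2) - (ρ₁' t + ρ₁ t ^ 2) := sub_nonneg.2 (hriccati t ht)
    _ = (ρ₂' t - ρ₁' t) + (ρ₁ t + ρ₂ t) * (ρ₂ t - ρ₁ t) := by ring

end

theorem riccati_weighted_difference_monotone_general {s : Set ℝ}
    {ρ₁ ρ₂ ρ₁' ρ₂' f : ℝ → ℝ} {t₀ : ℝ} (hs : IsOpen s) (hs' : s.OrdConnected)
    (hρ₁ : ∀ t ∈ s, HasDerivAt ρ₁ (ρ₁' t) t) (hρ₂ : ∀ t ∈ s, HasDerivAt ρ₂ (ρ₂' t) t)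
    (hriccati : ∀ t ∈ s, ρ₁' t + ρ₁ t ^ 2 ≤ ρ₂' t + ρ₂ t ^ 2)
    (ht₀ : t₀ ∈ s) (hf : EqOn f (fun t => ∫ τ in t₀..t, (ρ₁ τ + ρ₂ τ)) s) :
    MonotoneOn (fun t => (ρ₂ t - ρ₁ t) * Real.exp (f t)) s ∧
    ∀ t₁ ∈ s, ∀ t₂ ∈ s, t₁ ≤ t₂ →
      (ρ₂ t₁ - ρ₁ t₁) * Real.exp (f t₁ - f t₂) ≤ ρ₂ t₂ - ρ₁ t₂ := by
  have hρ₁c : ContinuousOn ρ₁ s := HasDerivAt.continuousOn hρ₁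
  have hρ₂c : ContinuousOn ρ₂ s := HasDerivAt.continuousOn hρ₂
  have hf' : ∀ t ∈ s, HasDerivAt f (ρ₁ t + ρ₂ t) t := fun t ht =>
    hasDerivAt_of_eqOn_integral hs hs' (hρ₁c.add hρ₂c) ht₀ hf ht
  have hmono : MonotoneOn (fun t => (ρ₂ t - ρ₁ t) * Real.exp (f t)) s := by
    apply monotoneOn_sub_mul_exp_of_riccati_le hs'.convex hρ₁c hρ₂c
      (HasDerivAt.continuousOn hf') <;> rwa [hs.interior_eq]
  exact ⟨hmono, fun t₁ ht₁ t₂ ht₂ hle => mul_exp_sub_le_iff.2 (hmono ht₁ ht₂ hle)⟩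

/-- **Monotonicity step in the Riccati comparison principle.** If
`ρ₁, ρ₂ : (0,b) → ℝ` are `C¹` with `ρ₁' + ρ₁² ≤ ρ₂' + ρ₂²` on `(0,b)`,
`t₀ ∈ (0,b)` and `f(t) = ∫_{t₀}^{t} (ρ₁ + ρ₂)`, then `(ρ₂ - ρ₁) e^f` is
nondecreasing on `(0,b)`; in particular
`ρ₂(t₂) - ρ₁(t₂) ≥ (ρ₂(t₁) - ρ₁(t₁)) e^{f(t₁) - f(t₂)}` for `0 < t₁ < t₂ < b`. -/
theorem riccati_weighted_difference_monotone
    (b : ℝ) (hb : 0 < b)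
    (ρ₁ ρ₂ ρ₁' ρ₂' : ℝ → ℝ)
    (hd₁ : ∀ t ∈ Ioo (0:ℝ) b, HasDerivAt ρ₁ (ρ₁' t) t)
    (hd₂ : ∀ t ∈ Ioo (0:ℝ) b, HasDerivAt ρ₂ (ρ₂' t) t)
    (hc₁ : ContinuousOn ρ₁' (Ioo (0:ℝ) b))
    (hc₂ : ContinuousOn ρ₂' (Ioo (0:ℝ) b))
    (hineq : ∀ t ∈ Ioo (0:ℝ) b, ρ₁' t + (ρ₁ t) ^ 2 ≤ ρ₂' t + (ρ₂ t) ^ 2)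
    (t₀ : ℝ) (ht₀ : t₀ ∈ Ioo (0:ℝ) b)
    (f : ℝ → ℝ)
    (hf : ∀ t ∈ Ioo (0:ℝ) b, f t = ∫ τ in t₀..t, (ρ₁ τ + ρ₂ τ)) :
    MonotoneOn (fun t => (ρ₂ t - ρ₁ t) * Real.exp (f t)) (Ioo (0:ℝ) b) ∧
    ∀ t₁ t₂ : ℝ, 0 < t₁ → t₁ < t₂ → t₂ < b →
      (ρ₂ t₁ - ρ₁ t₁) * Real.exp (f t₁ - f t₂) ≤ ρ₂ t₂ - ρ₁ t₂ := by
  obtain ⟨hmono, hle⟩ := riccati_weighted_difference_monotone_general isOpen_Ioo ordConnected_Ioo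
    hd₁ hd₂ hineq ht₀ hf
  exact ⟨hmono, fun t₁ t₂ h₁ h₁₂ h₂ => hle t₁ ⟨h₁, h₁₂.trans h₂⟩ t₂ ⟨h₁.trans h₁₂, h₂⟩ h₁₂.le⟩
end

section
/- Let k ∈ ℝ, let b ∈ (0, π/√k] (with the convention π/√k = +∞ when k ≤ 0), and let ρ : (0,b) → ℝ be continuously differentiable with ρ'(t) + ρ(t)² ≤ −k for every t ∈ (0,b) and lim_{t→0⁺} (ρ(t) − 1/t) = 0. Then ρ(t) ≤ sn_k'(t)/sn_k(t) for every t ∈ (0,b). -/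
open Set Filter Topology

/-- The function `sn_k`: `sin(√k t)/√k` for `k > 0`, `t` for `k = 0`,
`sinh(√(-k) t)/√(-k)` for `k < 0`. -/
noncomputable def snk (k : ℝ) (t : ℝ) : ℝ :=
  if 0 < k then Real.sin (Real.sqrt k * t) / Real.sqrt k
  else if k = 0 then t
  else Real.sinh (Real.sqrt (-k) * t) / Real.sqrt (-k)

/-!
Let `s` be positive on `(a, b)` with `s(t) = O(t - a)` and `ρ' + ρ² ≤ s''/s`, and put
`w = s² (ρ - s'/s)`. The terms linear in `w` cancel in the derivative and leave
`w' ≤ -(w / s)² ≤ 0`. If `w` were positive at some point, it would be positive to the left of it,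
where `(1 / w)' ≥ 1 / s² ≥ C / (t - a)²`; as the right-hand side is not integrable at `a`, this
would force `1 / w → -∞`, which is absurd. So `w ≤ 0`.

Taking `s = sn_k`, the comparison on `(0, π/√k)` rules out `b > π/√k`, because
`sn_k ρ ≤ sn_k'` becomes `0 ≤ -1` at `t = π/√k` (the one-dimensional Bonnet–Myers theorem).
-/

section BlowUp

variable {a b C : ℝ}

theorem tendsto_atBot_nhdsGT_of_div_sq_le_deriv {v v' : ℝ → ℝ} (hab : a < b) (hC : 0 < C)
    (hv : ∀ t ∈ Ioo a b, HasDerivAt v (v' t) t)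
    (hle : ∀ t ∈ Ioo a b, C / (t - a) ^ 2 ≤ v' t) :
    Tendsto v (𝓝[>] a) atBot := by
  have hderiv : ∀ t ∈ Ioo a b,
      HasDerivAt (fun u ↦ v u + C * (u - a)⁻¹) (v' t - C / (t - a) ^ 2) t := by
    intro t ht
    have hinv := ((hasDerivAt_id' t).sub_const a).fun_inv (sub_pos.2 ht.1).ne'
    exact ((hv t ht).add (hinv.const_mul C)).congr_deriv (by ring)
  have hmono : MonotoneOn (fun u ↦ v u + C * (u - a)⁻¹) (Ioo a b) :=
    monotoneOn_of_hasDerivWithinAt_nonneg (convex_Ioo a b)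
      (fun t ht ↦ (hderiv t ht).continuousAt.continuousWithinAt)
      (fun t ht ↦ (hderiv t (interior_subset ht)).hasDerivWithinAt)
      (fun t ht ↦ sub_nonneg.2 (hle t (interior_subset ht)))
  obtain ⟨m, hm⟩ := nonempty_Ioo.2 hab
  have hsub : Tendsto (fun t ↦ t - a) (𝓝[>] a) (𝓝[>] 0) := by
    refine tendsto_nhdsWithin_of_tendsto_nhds_of_eventually_within _ ?_ ?_
    · exact ((continuous_sub_right a).tendsto' a 0 (sub_self a)).mono_left nhdsWithin_le_nhds
    · exact eventually_mem_nhdsWithin.mono fun t ht ↦ mem_Ioi.2 (sub_pos.2 ht)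
  have hblow : Tendsto (fun t ↦ C * (t - a)⁻¹) (𝓝[>] a) atTop :=
    (tendsto_inv_nhdsGT_zero.comp hsub).const_mul_atTop hC
  refine tendsto_atBot_mono' _ ?_
    (tendsto_atBot_add_const_left _ (v m + C * (m - a)⁻¹) (tendsto_neg_atTop_atBot.comp hblow))
  filter_upwards [Ioo_mem_nhdsGT hm.1] with t ht
  have := hmono ⟨ht.1, ht.2.trans hm.2⟩ hm ht.2.le
  simp only [Function.comp_apply] at this ⊢
  linarith

theorem antitoneOn_Ioo_of_hasDerivAt_nonpos {w w' : ℝ → ℝ}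
    (hw : ∀ t ∈ Ioo a b, HasDerivAt w (w' t) t) (hle : ∀ t ∈ Ioo a b, w' t ≤ 0) :
    AntitoneOn w (Ioo a b) :=
  antitoneOn_of_hasDerivWithinAt_nonpos (convex_Ioo a b)
    (fun t ht ↦ (hw t ht).continuousAt.continuousWithinAt)
    (fun t ht ↦ (hw t (interior_subset ht)).hasDerivWithinAt)
    (fun t ht ↦ hle t (interior_subset ht))

theorem nonpos_of_deriv_le_neg_mul_sq_div_sub {w w' : ℝ → ℝ} (hC : 0 < C)
    (hw : ∀ t ∈ Ioo a b, HasDerivAt w (w' t) t)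
    (hle : ∀ t ∈ Ioo a b, w' t ≤ -(C * (w t / (t - a)) ^ 2)) :
    ∀ t ∈ Ioo a b, w t ≤ 0 := by
  have hanti : AntitoneOn w (Ioo a b) :=
    antitoneOn_Ioo_of_hasDerivAt_nonpos hw fun t ht ↦
      (hle t ht).trans (neg_nonpos.2 (by positivity))
  intro m hm
  by_contra! hwm
  have hsub : Ioo a m ⊆ Ioo a b := Ioo_subset_Ioo_right hm.2.le
  have hpos : ∀ t ∈ Ioo a m, 0 < w t := fun t ht ↦ hwm.trans_le (hanti (hsub ht) hm ht.2.le)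
  have hinv : Tendsto (fun t ↦ (w t)⁻¹) (𝓝[>] a) atBot := by
    refine tendsto_atBot_nhdsGT_of_div_sq_le_deriv hm.1 hC
      (fun t ht ↦ (hw t (hsub ht)).fun_inv (hpos t ht).ne') fun t ht ↦ ?_
    rw [le_div_iff₀ (pow_pos (hpos t ht) 2)]
    calc C / (t - a) ^ 2 * w t ^ 2 = C * (w t / (t - a)) ^ 2 := by rw [div_pow]; ring
      _ ≤ -w' t := le_neg_of_le_neg (hle t (hsub ht))
  obtain ⟨t, hneg, ht⟩ := ((hinv.eventually_lt_atBot 0).and (Ioo_mem_nhdsGT hm.1)).exists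
  exact (inv_pos.2 (hpos t ht)).not_gt hneg

theorem nonpos_of_deriv_le_neg_div_sq {s w w' : ℝ → ℝ}
    (hs : s =O[𝓝[>] a] fun t ↦ t - a) (hs₀ : ∀ t ∈ Ioo a b, s t ≠ 0)
    (hw : ∀ t ∈ Ioo a b, HasDerivAt w (w' t) t)
    (hle : ∀ t ∈ Ioo a b, w' t ≤ -(w t / s t) ^ 2) :
    ∀ t ∈ Ioo a b, w t ≤ 0 := by
  intro t ht
  obtain ⟨M, hM, hbound⟩ := hs.exists_pos
  obtain ⟨d, hd, hnear⟩ :=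
    (mem_nhdsGT_iff_exists_Ioo_subset' ht.1).1 (inter_mem hbound.bound (Ioo_mem_nhdsGT ht.1))
  have hsub : ∀ u ∈ Ioo a d, u ∈ Ioo a b := fun u hu ↦ ⟨hu.1, (hnear hu).2.2.trans ht.2⟩
  have hwd : ∀ u ∈ Ioo a d, w u ≤ 0 := by
    refine nonpos_of_deriv_le_neg_mul_sq_div_sub (C := (M ^ 2)⁻¹) (by positivity)
      (fun u hu ↦ hw u (hsub u hu)) fun u hu ↦ ?_
    have hsq : s u ^ 2 ≤ (M * (u - a)) ^ 2 := by
      rw [← sq_abs (s u), ← sq_abs (M * (u - a)), abs_mul, abs_of_pos hM]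
      exact pow_le_pow_left₀ (abs_nonneg _) (hnear hu).1 2
    have hs_sq : 0 < s u ^ 2 := sq_pos_of_ne_zero (hs₀ u (hsub u hu))
    refine (hle u (hsub u hu)).trans (neg_le_neg ?_)
    calc (M ^ 2)⁻¹ * (w u / (u - a)) ^ 2 = w u ^ 2 / (M * (u - a)) ^ 2 := by
          rw [mul_pow, div_pow]; field_simp
      _ ≤ w u ^ 2 / s u ^ 2 := by gcongr
      _ = (w u / s u) ^ 2 := (div_pow _ _ _).symm
  obtain ⟨u, hu⟩ := nonempty_Ioo.2 (mem_Ioi.1 hd)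
  have hanti : AntitoneOn w (Ioo a b) :=
    antitoneOn_Ioo_of_hasDerivAt_nonpos hw fun t ht ↦
      (hle t ht).trans (neg_nonpos.2 (sq_nonneg _))
  exact (hanti (hsub u hu) ht (hnear hu).2.2.le).trans (hwd u hu)

end BlowUp

theorem riccati_le_div_of_isBigO {a b : ℝ} {s s' s'' ρ ρ' : ℝ → ℝ}
    (hs : ∀ t ∈ Ioo a b, HasDerivAt s (s' t) t)
    (hs' : ∀ t ∈ Ioo a b, HasDerivAt s' (s'' t) t)
    (hpos : ∀ t ∈ Ioo a b, 0 < s t)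
    (hsO : s =O[𝓝[>] a] fun t ↦ t - a)
    (hρ : ∀ t ∈ Ioo a b, HasDerivAt ρ (ρ' t) t)
    (hineq : ∀ t ∈ Ioo a b, (ρ' t + ρ t ^ 2) * s t ≤ s'' t) :
    ∀ t ∈ Ioo a b, ρ t ≤ s' t / s t := by
  have hderiv : ∀ t ∈ Ioo a b, HasDerivAt (fun u ↦ s u * (s u * ρ u - s' u))
      (s t * ((ρ' t + ρ t ^ 2) * s t - s'' t) - (s t * ρ t - s' t) ^ 2) t := fun t ht ↦
    ((hs t ht).mul (((hs t ht).mul (hρ t ht)).sub (hs' t ht))).congr_deriv (by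
      simp only [Pi.sub_apply, Pi.mul_apply]; ring)
  have hle : ∀ t ∈ Ioo a b, s t * (s t * ρ t - s' t) ≤ 0 := by
    refine nonpos_of_deriv_le_neg_div_sq hsO (fun t ht ↦ (hpos t ht).ne') hderiv fun t ht ↦ ?_
    rw [mul_div_cancel_left₀ _ (hpos t ht).ne']
    have := mul_nonpos_of_nonneg_of_nonpos (hpos t ht).le (sub_nonpos.2 (hineq t ht))
    linarith
  intro t ht
  rw [le_div_iff₀ (hpos t ht), mul_comm]
  exact sub_nonpos.1 (nonpos_of_mul_nonpos_right (hle t ht) (hpos t ht))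

section ModelFunctions

variable {k : ℝ}

/-- The function `cs_k = sn_k'`: `cos(√k t)` for `k > 0`, `1` for `k = 0`, `cosh(√(-k) t)` for
`k < 0`; the model logarithmic derivative is `cs_k / sn_k`. -/
noncomputable def csk (k t : ℝ) : ℝ :=
  if 0 < k then Real.cos (√k * t) else if k = 0 then 1 else Real.cosh (√(-k) * t)

theorem snk_of_pos (hk : 0 < k) : snk k = fun t ↦ Real.sin (√k * t) / √k := by
  simp [funext_iff, snk, hk]

theorem snk_zero_left : snk 0 = fun t ↦ t := by
  simp [funext_iff, snk]

theorem snk_of_neg (hk : k < 0) : snk k = fun t ↦ Real.sinh (√(-k) * t) / √(-k) := by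
  simp [funext_iff, snk, hk.not_gt, hk.ne]

theorem csk_of_pos (hk : 0 < k) : csk k = fun t ↦ Real.cos (√k * t) := by
  simp [funext_iff, csk, hk]

theorem csk_zero_left : csk 0 = fun _ ↦ 1 := by
  simp [funext_iff, csk]

theorem csk_of_neg (hk : k < 0) : csk k = fun t ↦ Real.cosh (√(-k) * t) := by
  simp [funext_iff, csk, hk.not_gt, hk.ne]

theorem hasDerivAt_snk (k t : ℝ) : HasDerivAt (snk k) (csk k t) t := by
  rcases lt_trichotomy k 0 with hk | rfl | hk
  · have hr : √(-k) ≠ 0 := (Real.sqrt_pos.2 (neg_pos.2 hk)).ne'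
    rw [snk_of_neg hk, csk_of_neg hk]
    exact (((hasDerivAt_id' t).const_mul √(-k)).sinh.div_const √(-k)).congr_deriv (by field_simp)
  · rw [snk_zero_left, csk_zero_left]
    exact hasDerivAt_id' t
  · have hr : √k ≠ 0 := (Real.sqrt_pos.2 hk).ne'
    rw [snk_of_pos hk, csk_of_pos hk]
    exact (((hasDerivAt_id' t).const_mul √k).sin.div_const √k).congr_deriv (by field_simp)

theorem hasDerivAt_csk (k t : ℝ) : HasDerivAt (csk k) (-k * snk k t) t := by
  rcases lt_trichotomy k 0 with hk | rfl | hk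
  · have hr : √(-k) ≠ 0 := (Real.sqrt_pos.2 (neg_pos.2 hk)).ne'
    have hsq : √(-k) ^ 2 = -k := Real.sq_sqrt (neg_pos.2 hk).le
    rw [snk_of_neg hk, csk_of_neg hk]
    refine ((hasDerivAt_id' t).const_mul √(-k)).cosh.congr_deriv ?_
    nth_rw 3 [← hsq]
    field_simp
  · rw [csk_zero_left]
    simpa using hasDerivAt_const t (1 : ℝ)
  · have hr : √k ≠ 0 := (Real.sqrt_pos.2 hk).ne'
    have hsq : √k ^ 2 = k := Real.sq_sqrt hk.le
    rw [snk_of_pos hk, csk_of_pos hk]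
    refine ((hasDerivAt_id' t).const_mul √k).cos.congr_deriv ?_
    nth_rw 3 [← hsq]
    field_simp

theorem snk_zero_right (k : ℝ) : snk k 0 = 0 := by
  simp [snk]

theorem snk_pos {t : ℝ} (ht : 0 < t) (htk : 0 < k → t < Real.pi / √k) : 0 < snk k t := by
  rcases lt_trichotomy k 0 with hk | rfl | hk
  · have hr : 0 < √(-k) := Real.sqrt_pos.2 (neg_pos.2 hk)
    rw [snk_of_neg hk]
    exact div_pos (Real.sinh_pos_iff.2 (mul_pos hr ht)) hr
  · rwa [snk_zero_left]
  · have hr : 0 < √k := Real.sqrt_pos.2 hk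
    rw [snk_of_pos hk]
    exact div_pos (Real.sin_pos_of_pos_of_lt_pi (mul_pos hr ht) ((lt_div_iff₀' hr).1 (htk hk))) hr

theorem snk_pi_div_sqrt (hk : 0 < k) : snk k (Real.pi / √k) = 0 := by
  simp [snk_of_pos hk, mul_div_cancel₀ _ (Real.sqrt_pos.2 hk).ne']

theorem csk_pi_div_sqrt (hk : 0 < k) : csk k (Real.pi / √k) = -1 := by
  simp [csk_of_pos hk, mul_div_cancel₀ _ (Real.sqrt_pos.2 hk).ne']

theorem snk_isBigO_nhdsGT_zero (k : ℝ) : snk k =O[𝓝[>] 0] fun t ↦ t := by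
  simpa only [snk_zero_right, sub_zero] using
    (hasDerivAt_snk k 0).isBigO_sub.mono nhdsWithin_le_nhds

end ModelFunctions

section Comparison

variable {k b : ℝ} {ρ ρ' : ℝ → ℝ}

theorem riccati_le_csk_div_snk (hbk : 0 < k → b ≤ Real.pi / √k)
    (hd : ∀ t ∈ Ioo 0 b, HasDerivAt ρ (ρ' t) t)
    (hineq : ∀ t ∈ Ioo 0 b, ρ' t + ρ t ^ 2 ≤ -k) :
    ∀ t ∈ Ioo 0 b, ρ t ≤ csk k t / snk k t := by
  have hpos : ∀ t ∈ Ioo 0 b, 0 < snk k t := fun t ht ↦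
    snk_pos ht.1 fun hk ↦ ht.2.trans_le (hbk hk)
  exact riccati_le_div_of_isBigO (fun t _ ↦ hasDerivAt_snk k t) (fun t _ ↦ hasDerivAt_csk k t)
    hpos (by simpa only [sub_zero] using snk_isBigO_nhdsGT_zero k) hd
    fun t ht ↦ mul_le_mul_of_nonneg_right (hineq t ht) (hpos t ht).le

theorem le_pi_div_sqrt_of_riccati (hk : 0 < k)
    (hd : ∀ t ∈ Ioo 0 b, HasDerivAt ρ (ρ' t) t)
    (hineq : ∀ t ∈ Ioo 0 b, ρ' t + ρ t ^ 2 ≤ -k) :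
    b ≤ Real.pi / √k := by
  by_contra! hlt
  set p := Real.pi / √k
  have hp : 0 < p := div_pos Real.pi_pos (Real.sqrt_pos.2 hk)
  have hsub : Ioo 0 p ⊆ Ioo 0 b := Ioo_subset_Ioo_right hlt.le
  have hle : ∀ t ∈ Ioo 0 p, ρ t * snk k t ≤ csk k t := fun t ht ↦
    (le_div_iff₀ (snk_pos ht.1 fun _ ↦ ht.2)).1 <|
      riccati_le_csk_div_snk (fun _ ↦ le_rfl) (fun u hu ↦ hd u (hsub hu))
        (fun u hu ↦ hineq u (hsub hu)) t ht
  have hle_p : ρ p * snk k p ≤ csk k p :=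
    le_of_tendsto_of_tendsto
      (((hd p ⟨hp, hlt⟩).continuousAt.mul (hasDerivAt_snk k p).continuousAt).mono_left
        nhdsWithin_le_nhds)
      ((hasDerivAt_csk k p).continuousAt.mono_left nhdsWithin_le_nhds)
      (eventually_of_mem (Ioo_mem_nhdsLT hp) hle)
  rw [snk_pi_div_sqrt hk, csk_pi_div_sqrt hk] at hle_p
  linarith

theorem riccati_upper_comparison_snk_general
    (hd : ∀ t ∈ Ioo 0 b, HasDerivAt ρ (ρ' t) t)
    (hineq : ∀ t ∈ Ioo 0 b, ρ' t + ρ t ^ 2 ≤ -k) :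
    ∀ t ∈ Ioo 0 b, ρ t ≤ deriv (snk k) t / snk k t := by
  intro t ht
  rw [(hasDerivAt_snk k t).deriv]
  exact riccati_le_csk_div_snk (fun hk ↦ le_pi_div_sqrt_of_riccati hk hd hineq) hd hineq t ht

end Comparison

/-- **Comparison with the model logarithmic derivative, lower curvature bound.**
Let `k ∈ ℝ` and `b ∈ (0, π/√k]` (with the convention `π/√k = +∞` for `k ≤ 0`).
If `ρ : (0,b) → ℝ` is `C¹`, satisfies `ρ' + ρ² ≤ -k` on `(0,b)` and
`ρ(t) - 1/t → 0` as `t → 0⁺`, then `ρ(t) ≤ sn_k'(t)/sn_k(t)` on `(0,b)`. -/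
theorem riccati_upper_comparison_snk
    (k b : ℝ) (hb : 0 < b) (hbk : 0 < k → b ≤ Real.pi / Real.sqrt k)
    (ρ ρ' : ℝ → ℝ)
    (hd : ∀ t ∈ Ioo (0:ℝ) b, HasDerivAt ρ (ρ' t) t)
    (hc : ContinuousOn ρ' (Ioo (0:ℝ) b))
    (hineq : ∀ t ∈ Ioo (0:ℝ) b, ρ' t + (ρ t) ^ 2 ≤ -k)
    (hlim : Tendsto (fun t => ρ t - 1 / t) (𝓝[>] (0:ℝ)) (𝓝 0)) :
    ∀ t ∈ Ioo (0:ℝ) b, ρ t ≤ deriv (snk k) t / snk k t :=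
  riccati_upper_comparison_snk_general hd hineq
end

section
/- Let K ≤ 0, let b > 0, and let ρ : (0,b) → ℝ be continuously differentiable with ρ'(t) + ρ(t)² ≥ −K for every t ∈ (0,b) and lim_{t→0⁺} (ρ(t) − 1/t) = 0. Then ρ(t) ≥ 1/t > 0 for every t ∈ (0,b). -/
open Set Filter Topology

/-!
Two functions with `σ' + σ² ≤ ρ' + ρ²` have a difference `w = ρ - σ` satisfying the linear
inequality `w' + (ρ + σ) w ≥ 0`, so an integrating factor shows that `σ ≤ ρ` persists to the right.
The functions `1 / (x - d)` with `d < 0` solve `σ' + σ² = 0` and stay bounded near `0`. Since `ρ`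
blows up at `0`, it lies above each of them near `0`, hence on the whole interval; now let `d → 0`.
-/

theorem nonneg_of_deriv_add_mul_nonneg_s10 {p w w' : ℝ → ℝ} {s t : ℝ}
    (hp : ContinuousOn p (Icc s t)) (hw : ContinuousOn w (Icc s t))
    (hw' : ∀ x ∈ Ioo s t, HasDerivAt w (w' x) x)
    (hineq : ∀ x ∈ Ioo s t, 0 ≤ w' x + p x * w x) (hs : 0 ≤ w s) :
    ∀ x ∈ Icc s t, 0 ≤ w x := by
  intro x hx
  have hst : s ≤ t := hx.1.trans hx.2
  let P : ℝ → ℝ := fun y ↦ ∫ z in s..y, p z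
  have hP : ContinuousOn P (Icc s t) := by
    rw [← uIcc_of_le hst] at hp ⊢
    exact intervalIntegral.continuousOn_primitive_interval (hp.integrableOn_compact isCompact_uIcc)
  have hP' : ∀ y ∈ Ioo s t, HasDerivAt P (p y) y := fun y hy ↦
    intervalIntegral.integral_hasDerivAt_right
      ((hp.mono (Icc_subset_Icc_right hy.2.le)).intervalIntegrable_of_Icc hy.1.le)
      ((hp.mono Ioo_subset_Icc_self).stronglyMeasurableAtFilter isOpen_Ioo y hy)
      (hp.continuousAt (Icc_mem_nhds hy.1 hy.2))
  have hmono : MonotoneOn (fun y ↦ Real.exp (P y) * w y) (Icc s t) := by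
    refine monotoneOn_of_hasDerivWithinAt_nonneg (convex_Icc s t) (hP.rexp.mul hw)
      (f' := fun y ↦ Real.exp (P y) * (w' y + p y * w y)) ?_ ?_ <;>
      intro y hy <;> rw [interior_Icc] at hy
    · exact (((hP' y hy).exp.mul (hw' y hy)).congr_deriv (by ring)).hasDerivWithinAt
    · exact mul_nonneg (Real.exp_pos _).le (hineq y hy)
  have hexp : 0 ≤ Real.exp (P x) * w x :=
    (mul_nonneg (Real.exp_pos _).le hs).trans (hmono (left_mem_Icc.mpr hst) hx hx.1)
  exact nonneg_of_mul_nonneg_right hexp (Real.exp_pos _)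

theorem le_of_deriv_add_sq_le_deriv_add_sq {σ σ' ρ ρ' : ℝ → ℝ} {s t : ℝ}
    (hσ : ContinuousOn σ (Icc s t)) (hρ : ContinuousOn ρ (Icc s t))
    (hσ' : ∀ x ∈ Ioo s t, HasDerivAt σ (σ' x) x) (hρ' : ∀ x ∈ Ioo s t, HasDerivAt ρ (ρ' x) x)
    (hineq : ∀ x ∈ Ioo s t, σ' x + σ x ^ 2 ≤ ρ' x + ρ x ^ 2) (hs : σ s ≤ ρ s) :
    ∀ x ∈ Icc s t, σ x ≤ ρ x := by
  have hdiff : ∀ x ∈ Icc s t, 0 ≤ (ρ - σ) x :=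
    nonneg_of_deriv_add_mul_nonneg_s10 (hρ.add hσ) (hρ.sub hσ)
      (fun x hx ↦ (hρ' x hx).sub (hσ' x hx))
      (fun x hx ↦ by simp only [Pi.add_apply, Pi.sub_apply]; linarith [hineq x hx])
      (sub_nonneg.mpr hs)
  exact fun x hx ↦ sub_nonneg.mp (hdiff x hx)

theorem hasDerivAt_one_div_sub {d x : ℝ} (hx : d < x) :
    HasDerivAt (fun y ↦ 1 / (y - d)) (-(1 / (x - d)) ^ 2) x := by
  simpa [neg_div] using ((hasDerivAt_id x).sub_const d).fun_inv (sub_pos.mpr hx).ne'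

theorem one_div_sub_le_of_deriv_add_sq_nonneg {ρ ρ' : ℝ → ℝ} {a b d : ℝ} (hd : d < a)
    (hρ' : ∀ t ∈ Ioo a b, HasDerivAt ρ (ρ' t) t)
    (hineq : ∀ t ∈ Ioo a b, 0 ≤ ρ' t + ρ t ^ 2) (hlim : Tendsto ρ (𝓝[>] a) atTop) :
    ∀ t ∈ Ioo a b, 1 / (t - d) ≤ ρ t := by
  intro t ht
  obtain ⟨s, hs_ge, hs⟩ : ∃ s, 1 / (a - d) ≤ ρ s ∧ s ∈ Ioo a t :=
    ((hlim.eventually_ge_atTop _).and (Ioo_mem_nhdsGT ht.1)).exists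
  have hstart : 1 / (s - d) ≤ ρ s :=
    (one_div_le_one_div_of_le (sub_pos.mpr hd) (by linarith [hs.1])).trans hs_ge
  have hbarrier : ∀ x ∈ Icc s t, HasDerivAt (fun y ↦ 1 / (y - d)) (-(1 / (x - d)) ^ 2) x :=
    fun x hx ↦ hasDerivAt_one_div_sub (hd.trans (hs.1.trans_le hx.1))
  have hsub : Icc s t ⊆ Ioo a b := Icc_subset_Ioo hs.1 ht.2
  refine le_of_deriv_add_sq_le_deriv_add_sq
    (HasDerivAt.continuousOn hbarrier) (HasDerivAt.continuousOn fun x hx ↦ hρ' x (hsub hx))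
    (fun x hx ↦ hbarrier x (Ioo_subset_Icc_self hx))
    (fun x hx ↦ hρ' x (hsub (Ioo_subset_Icc_self hx)))
    (fun x hx ↦ ?_) hstart t (right_mem_Icc.mpr hs.2.le)
  simpa only [neg_add_cancel] using hineq x (hsub (Ioo_subset_Icc_self hx))

theorem riccati_positivity_nonpositive_curvature_general {ρ ρ' : ℝ → ℝ} {a b : ℝ}
    (hρ' : ∀ t ∈ Ioo a b, HasDerivAt ρ (ρ' t) t)
    (hineq : ∀ t ∈ Ioo a b, 0 ≤ ρ' t + ρ t ^ 2) (hlim : Tendsto ρ (𝓝[>] a) atTop) :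
    ∀ t ∈ Ioo a b, 1 / (t - a) ≤ ρ t := by
  intro t ht
  have hcont : Tendsto (fun d ↦ 1 / (t - d)) (𝓝[<] a) (𝓝 (1 / (t - a))) :=
    ContinuousAt.tendsto (by fun_prop (disch := exact (sub_pos.mpr ht.1).ne')) |>.mono_left
      nhdsWithin_le_nhds
  refine le_of_tendsto hcont ?_
  filter_upwards [self_mem_nhdsWithin] with d hd
  exact one_div_sub_le_of_deriv_add_sq_nonneg hd hρ' hineq hlim t ht

/-- **Analytic core of the Cartan–Hadamard theorem.** If `K ≤ 0`, `b > 0` and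
`ρ : (0,b) → ℝ` is `C¹` with `ρ' + ρ² ≥ -K` on `(0,b)` and `ρ(t) - 1/t → 0` as
`t → 0⁺`, then `ρ(t) ≥ 1/t > 0` for every `t ∈ (0,b)`. -/
theorem riccati_positivity_nonpositive_curvature
    (K b : ℝ) (hK : K ≤ 0) (hb : 0 < b)
    (ρ ρ' : ℝ → ℝ)
    (hd : ∀ t ∈ Ioo (0:ℝ) b, HasDerivAt ρ (ρ' t) t)
    (hc : ContinuousOn ρ' (Ioo (0:ℝ) b))
    (hineq : ∀ t ∈ Ioo (0:ℝ) b, -K ≤ ρ' t + (ρ t) ^ 2)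
    (hlim : Tendsto (fun t => ρ t - 1 / t) (𝓝[>] (0:ℝ)) (𝓝 0)) :
    ∀ t ∈ Ioo (0:ℝ) b, 1 / t ≤ ρ t ∧ 0 < 1 / t := by
  have hblowup : Tendsto ρ (𝓝[>] 0) atTop := by
    simpa using hlim.add_atTop tendsto_inv_nhdsGT_zero
  have hnonneg : ∀ t ∈ Ioo 0 b, 0 ≤ ρ' t + ρ t ^ 2 := fun t ht ↦
    (neg_nonneg.mpr hK).trans (hineq t ht)
  intro t ht
  have hle := riccati_positivity_nonpositive_curvature_general hd hnonneg hblowup t ht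
  exact ⟨by rwa [sub_zero] at hle, one_div_pos.mpr ht.1⟩
end

section
/- Let I ⊆ ℝ be an open interval and let A : I → Mat(n×n, ℝ) be a map with A(r) symmetric for every r, differentiable at a point r₀ ∈ I. Suppose the function λ_max(r) (the largest eigenvalue of A(r)) is differentiable at r₀, and let w ∈ ℝⁿ be a unit vector with A(r₀)w = λ_max(r₀)w. Then λ_max'(r₀) = ⟨A'(r₀)w, w⟩, where ⟨·,·⟩ is the standard Euclidean inner product on ℝⁿ. The analogous identity holds for the smallest eigenvalue λ_min with a corresponding unit eigenvector. -/
open Set Filter Topology Matrix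

/-- `μ` is the largest (real) eigenvalue of the matrix `A`. -/
def IsMaxEigenvalue {n : ℕ} (A : Matrix (Fin n) (Fin n) ℝ) (μ : ℝ) : Prop :=
  (∃ v : Fin n → ℝ, v ≠ 0 ∧ A.mulVec v = μ • v) ∧
  ∀ μ' : ℝ, (∃ v : Fin n → ℝ, v ≠ 0 ∧ A.mulVec v = μ' • v) → μ' ≤ μ

/-- `μ` is the smallest (real) eigenvalue of the matrix `A`. -/
def IsMinEigenvalue {n : ℕ} (A : Matrix (Fin n) (Fin n) ℝ) (μ : ℝ) : Prop :=
  (∃ v : Fin n → ℝ, v ≠ 0 ∧ A.mulVec v = μ • v) ∧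
  ∀ μ' : ℝ, (∃ v : Fin n → ℝ, v ≠ 0 ∧ A.mulVec v = μ' • v) → μ ≤ μ'

/-!
If `w` is a unit eigenvector of `A r₀` for an extremal eigenvalue, the Rayleigh bound says that
`r ↦ ⟨A r w, w⟩` stays on one side of the extremal eigenvalue near `r₀`, with equality at `r₀`. The
difference therefore has a local extremum there, so the two derivatives agree.
-/

theorem mem_spectrum_iff_exists_mulVec_eq_smul {K ι : Type*} [Field K] [Fintype ι] [DecidableEq ι]
    {A : Matrix ι ι K} {μ : K} : μ ∈ spectrum K A ↔ ∃ v ≠ 0, A *ᵥ v = μ • v := by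
  rw [← spectrum_toLin', ← Module.End.hasEigenvalue_iff_mem_spectrum]
  constructor
  · intro hμ
    obtain ⟨v, hv⟩ := hμ.exists_hasEigenvector
    exact ⟨v, hv.2, hv.apply_eq_smul⟩
  · rintro ⟨v, hv₀, hv⟩
    exact Module.End.hasEigenvalue_of_hasEigenvector
      ⟨Module.End.mem_eigenspace_iff.2 hv, hv₀⟩

theorem isMaxEigenvalue_iff_isGreatest_spectrum {n : ℕ} {A : Matrix (Fin n) (Fin n) ℝ} {μ : ℝ} :
    IsMaxEigenvalue A μ ↔ IsGreatest (spectrum ℝ A) μ := by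
  simp only [IsMaxEigenvalue, IsGreatest, upperBounds, mem_ofPred_eq,
    mem_spectrum_iff_exists_mulVec_eq_smul]

theorem isMinEigenvalue_iff_isLeast_spectrum {n : ℕ} {A : Matrix (Fin n) (Fin n) ℝ} {μ : ℝ} :
    IsMinEigenvalue A μ ↔ IsLeast (spectrum ℝ A) μ := by
  simp only [IsMinEigenvalue, IsLeast, lowerBounds, mem_ofPred_eq,
    mem_spectrum_iff_exists_mulVec_eq_smul]

theorem hasDerivAt_dotProduct_mulVec {𝕜 R m n : Type*} [NontriviallyNormedField 𝕜] [NormedRing R]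
    [NormedAlgebra 𝕜 R] [Fintype m] [Fintype n] {A : 𝕜 → Matrix m n R} {A' : Matrix m n R} {t : 𝕜}
    (hA : ∀ i j, HasDerivAt (fun r => A r i j) (A' i j) t) (u : m → R) (v : n → R) :
    HasDerivAt (fun r => u ⬝ᵥ A r *ᵥ v) (u ⬝ᵥ A' *ᵥ v) t :=
  .fun_sum fun i _ => .const_mul (u i) <| .fun_sum fun j _ => (hA i j).mul_const (v j)

theorem algebraMap_mulVec {R S ι : Type*} [CommSemiring R] [Semiring S] [Algebra R S] [Fintype ι]
    [DecidableEq ι] (μ : R) (v : ι → S) : algebraMap R (Matrix ι ι S) μ *ᵥ v = μ • v := by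
  rw [Algebra.algebraMap_eq_smul_one, smul_mulVec, one_mulVec]

section Rayleigh

open scoped MatrixOrder

variable {𝕜 ι : Type*} [RCLike 𝕜] [Fintype ι]

theorem re_dotProduct_mulVec_mono {A B : Matrix ι ι 𝕜} (hAB : A ≤ B) (v : ι → 𝕜) :
    RCLike.re (star v ⬝ᵥ A *ᵥ v) ≤ RCLike.re (star v ⬝ᵥ B *ᵥ v) := by
  simpa only [sub_mulVec, dotProduct_sub, map_sub, sub_nonneg]
    using (Matrix.le_iff.1 hAB).re_dotProduct_nonneg v

theorem re_dotProduct_mulVec_of_mulVec_eq_smul {A : Matrix ι ι 𝕜} {μ : ℝ} {v : ι → 𝕜}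
    (hv : star v ⬝ᵥ v = 1) (hAv : A *ᵥ v = μ • v) : RCLike.re (star v ⬝ᵥ A *ᵥ v) = μ := by
  rw [hAv, dotProduct_smul, hv, RCLike.smul_re, RCLike.one_re, mul_one]

variable [DecidableEq ι] {A : Matrix ι ι 𝕜} {μ : ℝ} {v : ι → 𝕜}

theorem re_dotProduct_mulVec_le_of_mem_upperBounds (hA : A.IsHermitian)
    (hμ : μ ∈ upperBounds (spectrum ℝ A)) (hv : star v ⬝ᵥ v = 1) :
    RCLike.re (star v ⬝ᵥ A *ᵥ v) ≤ μ :=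
  calc RCLike.re (star v ⬝ᵥ A *ᵥ v)
      ≤ RCLike.re (star v ⬝ᵥ algebraMap ℝ (Matrix ι ι 𝕜) μ *ᵥ v) :=
        re_dotProduct_mulVec_mono (le_algebraMap_of_spectrum_le hμ hA) v
    _ = μ := re_dotProduct_mulVec_of_mulVec_eq_smul hv (algebraMap_mulVec μ v)

theorem le_re_dotProduct_mulVec_of_mem_lowerBounds (hA : A.IsHermitian)
    (hμ : μ ∈ lowerBounds (spectrum ℝ A)) (hv : star v ⬝ᵥ v = 1) :
    μ ≤ RCLike.re (star v ⬝ᵥ A *ᵥ v) :=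
  calc μ = RCLike.re (star v ⬝ᵥ algebraMap ℝ (Matrix ι ι 𝕜) μ *ᵥ v) :=
        (re_dotProduct_mulVec_of_mulVec_eq_smul hv (algebraMap_mulVec μ v)).symm
    _ ≤ RCLike.re (star v ⬝ᵥ A *ᵥ v) :=
        re_dotProduct_mulVec_mono (algebraMap_le_of_le_spectrum hμ hA) v

end Rayleigh

theorem extremal_eigenvalue_deriv_general {𝕜 ι : Type*} [RCLike 𝕜] [Fintype ι] [DecidableEq ι]
    {A : ℝ → Matrix ι ι 𝕜} {A' : Matrix ι ι 𝕜} {l : ℝ → ℝ} {d t : ℝ} {w : ι → 𝕜}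
    (hA : ∀ᶠ r in 𝓝 t, (A r).IsHermitian)
    (hA' : ∀ i j, HasDerivAt (fun r => A r i j) (A' i j) t)
    (hl : (∀ᶠ r in 𝓝 t, l r ∈ upperBounds (spectrum ℝ (A r))) ∨
      ∀ᶠ r in 𝓝 t, l r ∈ lowerBounds (spectrum ℝ (A r)))
    (hw : star w ⬝ᵥ w = 1) (hAw : A t *ᵥ w = l t • w) (hd : HasDerivAt l d t) :
    d = RCLike.re (A' *ᵥ w ⬝ᵥ star w) := by
  rw [dotProduct_comm]
  let q : ℝ → ℝ := fun r => RCLike.re (star w ⬝ᵥ A r *ᵥ w)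
  have hq : HasDerivAt q (RCLike.re (star w ⬝ᵥ A' *ᵥ w)) t :=
    (RCLike.reCLM (K := 𝕜)).hasFDerivAt.comp_hasDerivAt t
      (hasDerivAt_dotProduct_mulVec hA' (star w) w)
  have hqt : l t - q t = 0 :=
    sub_eq_zero.2 (re_dotProduct_mulVec_of_mulVec_eq_smul hw hAw).symm
  have hextr : IsLocalExtr (fun r => l r - q r) t := by
    refine hl.imp (fun hupper => ?_) (fun hlower => ?_)
    · filter_upwards [hA, hupper] with r hAr hlr
      rw [hqt]
      exact sub_nonneg.2 (re_dotProduct_mulVec_le_of_mem_upperBounds hAr hlr hw)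
    · filter_upwards [hA, hlower] with r hAr hlr
      rw [hqt]
      exact sub_nonpos.2 (le_re_dotProduct_mulVec_of_mem_lowerBounds hAr hlr hw)
  exact sub_eq_zero.1 (hextr.hasDerivAt_eq_zero (hd.fun_sub hq))

/-- **Derivative of the extremal eigenvalues.** Let `A : (a,b) → Mat(n×n,ℝ)`
take symmetric values and be differentiable at `r₀ ∈ (a,b)`, with derivative
matrix `A'`. If the largest eigenvalue function `λ_max` is differentiable at
`r₀` with derivative `dmax`, and `w` is a unit eigenvector of `A(r₀)` for
`λ_max(r₀)`, then `dmax = ⟨A' w, w⟩`; and the analogous identity holds for the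
smallest eigenvalue. -/
theorem extremal_eigenvalue_deriv {n : ℕ} (a b r₀ : ℝ) (hr₀ : r₀ ∈ Ioo a b)
    (A : ℝ → Matrix (Fin n) (Fin n) ℝ)
    (hsym : ∀ r ∈ Ioo a b, (A r).IsSymm)
    (A' : Matrix (Fin n) (Fin n) ℝ)
    (hA' : ∀ i j, HasDerivAt (fun r => A r i j) (A' i j) r₀)
    (lmax lmin : ℝ → ℝ)
    (hlmax : ∀ r ∈ Ioo a b, IsMaxEigenvalue (A r) (lmax r))
    (hlmin : ∀ r ∈ Ioo a b, IsMinEigenvalue (A r) (lmin r))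
    (w : Fin n → ℝ) (hw : w ⬝ᵥ w = 1) (hwe : (A r₀).mulVec w = lmax r₀ • w)
    (w' : Fin n → ℝ) (hw' : w' ⬝ᵥ w' = 1) (hwe' : (A r₀).mulVec w' = lmin r₀ • w')
    (dmax dmin : ℝ)
    (hdmax : HasDerivAt lmax dmax r₀)
    (hdmin : HasDerivAt lmin dmin r₀) :
    dmax = A'.mulVec w ⬝ᵥ w ∧ dmin = A'.mulVec w' ⬝ᵥ w' := by
  have hI : ∀ᶠ r in 𝓝 r₀, r ∈ Ioo a b := isOpen_Ioo.eventually_mem hr₀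
  have hherm : ∀ᶠ r in 𝓝 r₀, (A r).IsHermitian :=
    hI.mono fun r hr => isHermitian_iff_isSymm.2 (hsym r hr)
  exact ⟨extremal_eigenvalue_deriv_general hherm hA'
      (.inl <| hI.mono fun r hr => (isMaxEigenvalue_iff_isGreatest_spectrum.1 (hlmax r hr)).2)
      hw hwe hdmax,
    extremal_eigenvalue_deriv_general hherm hA'
      (.inr <| hI.mono fun r hr => (isMinEigenvalue_iff_isLeast_spectrum.1 (hlmin r hr)).2)
      hw' hwe' hdmin⟩
end

section
/- Let a < b, let g, h : [a,b) → Mat(n×n, ℝ) be maps with g(r) symmetric positive definite and h(r) symmetric for every r, the entries of g continuously differentiable, satisfying g'(r) = 2h(r) for every r ∈ [a,b), and suppose there is c ∈ ℝ with ⟨h(r)x, x⟩ ≥ c⟨g(r)x, x⟩ for every r ∈ [a,b) and every x ∈ ℝⁿ. Then the smallest eigenvalue λ_min of g satisfies λ_min(r) ≥ λ_min(a) e^{2c(r−a)} > 0 for every r ∈ [a,b); in particular g(r) remains positive definite and nondegenerate on [a,b). -/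
open Set Filter Topology Matrix

/-!
For fixed `x`, the function `q t = ⟨g(t) x, x⟩` satisfies `q' = 2 ⟨h x, x⟩ ≥ 2c q`, so
`q r ≥ q a * exp (2c (r - a))`. Take for `x` an eigenvector of `g r` to its smallest eigenvalue:
then `q r = λ_min(r) ⟨x, x⟩`, while `q a ≥ λ_min(a) ⟨x, x⟩` by the Rayleigh bound for `g a`.
-/

theorem mul_exp_le_of_mul_le_hasDerivWithinAt {f f' : ℝ → ℝ} {s : Set ℝ} {k a r : ℝ}
    (hs : Convex ℝ s) (hf : ∀ t ∈ s, HasDerivWithinAt f (f' t) s t)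
    (hk : ∀ t ∈ s, k * f t ≤ f' t) (ha : a ∈ s) (hr : r ∈ s) (har : a ≤ r) :
    f a * Real.exp (k * (r - a)) ≤ f r := by
  have hexp (t : ℝ) :
      HasDerivAt (fun u ↦ Real.exp (k * (r - u))) (-k * Real.exp (k * (r - t))) t := by
    simpa [mul_comm] using (((hasDerivAt_id t).const_sub r).const_mul k).exp
  have hderiv (t : ℝ) (ht : t ∈ s) : HasDerivWithinAt (fun u ↦ f u * Real.exp (k * (r - u)))
      ((f' t - k * f t) * Real.exp (k * (r - t))) s t :=
    ((hf t ht).mul (hexp t).hasDerivWithinAt).congr_deriv (by ring)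
  have hmono : MonotoneOn (fun t ↦ f t * Real.exp (k * (r - t))) s :=
    monotoneOn_of_hasDerivWithinAt_nonneg hs (fun t ht ↦ (hderiv t ht).continuousWithinAt)
      (fun t ht ↦ (hderiv t (interior_subset ht)).mono interior_subset)
      fun t ht ↦ mul_nonneg (sub_nonneg.2 (hk t (interior_subset ht))) (Real.exp_pos _).le
  simpa using hmono ha hr har

section QuadraticForm

variable {ι : Type*} [Fintype ι]

theorem hasDerivWithinAt_mulVec_dotProduct {𝕜 κ : Type*} [NontriviallyNormedField 𝕜] [Fintype κ]
    {g : 𝕜 → Matrix ι κ 𝕜} {g' : Matrix ι κ 𝕜} {s : Set 𝕜} {t : 𝕜}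
    (hg : ∀ i j, HasDerivWithinAt (fun u ↦ g u i j) (g' i j) s t) (x : κ → 𝕜) (y : ι → 𝕜) :
    HasDerivWithinAt (fun u ↦ g u *ᵥ x ⬝ᵥ y) (g' *ᵥ x ⬝ᵥ y) s t :=
  .fun_sum fun i _ ↦ .mul_const (.fun_sum fun j _ ↦ (hg i j).mul_const (x j)) (y i)

theorem mulVec_dotProduct_mul_exp_le {g h : ℝ → Matrix ι ι ℝ} {s : Set ℝ} {c a r : ℝ}
    (hs : Convex ℝ s)
    (hg : ∀ t ∈ s, ∀ i j, HasDerivWithinAt (fun u ↦ g u i j) (2 * h t i j) s t) {x : ι → ℝ}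
    (hc : ∀ t ∈ s, c * (g t *ᵥ x ⬝ᵥ x) ≤ h t *ᵥ x ⬝ᵥ x) (ha : a ∈ s) (hr : r ∈ s) (har : a ≤ r) :
    (g a *ᵥ x ⬝ᵥ x) * Real.exp (2 * c * (r - a)) ≤ g r *ᵥ x ⬝ᵥ x := by
  refine mul_exp_le_of_mul_le_hasDerivWithinAt hs
    (fun t ht ↦ hasDerivWithinAt_mulVec_dotProduct (g' := (2 : ℝ) • h t) (hg t ht) x x)
    (fun t ht ↦ ?_) ha hr har
  rw [smul_mulVec, smul_dotProduct, smul_eq_mul, mul_assoc]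
  gcongr
  exact hc t ht

open scoped ComplexOrder MatrixOrder in
theorem smul_dotProduct_self_le_of_le_spectrum {𝕜 : Type*} [RCLike 𝕜] [DecidableEq ι]
    {A : Matrix ι ι 𝕜} (hA : A.IsHermitian) {m : ℝ} (hm : ∀ μ ∈ spectrum ℝ A, m ≤ μ) (x : ι → 𝕜) :
    m • (star x ⬝ᵥ x) ≤ star x ⬝ᵥ A *ᵥ x := by
  have hle : algebraMap ℝ (Matrix ι ι 𝕜) m ≤ A := algebraMap_le_of_le_spectrum hm hA
  simpa [Algebra.algebraMap_eq_smul_one, sub_mulVec, smul_mulVec] using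
    (Matrix.le_iff.1 hle).dotProduct_mulVec_nonneg x

end QuadraticForm

namespace IsMinEigenvalue

variable {n : ℕ} {A : Matrix (Fin n) (Fin n) ℝ} {μ : ℝ}

theorem le_of_mem_spectrum (hμ : IsMinEigenvalue A μ) {ν : ℝ} (hν : ν ∈ spectrum ℝ A) : μ ≤ ν := by
  rw [← spectrum_toLin', ← Module.End.hasEigenvalue_iff_mem_spectrum] at hν
  obtain ⟨v, hv⟩ := hν.exists_hasEigenvector
  exact hμ.2 ν ⟨v, hv.2, hv.apply_eq_smul⟩

theorem mul_dotProduct_self_le_mulVec_dotProduct (hμ : IsMinEigenvalue A μ)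
    (hA : A.IsHermitian) (x : Fin n → ℝ) :
    μ * (x ⬝ᵥ x) ≤ A *ᵥ x ⬝ᵥ x := by
  simpa [dotProduct_comm] using
    smul_dotProduct_self_le_of_le_spectrum hA (fun _ ↦ hμ.le_of_mem_spectrum) x

theorem pos (hμ : IsMinEigenvalue A μ) (hA : A.PosDef) : 0 < μ := by
  obtain ⟨x, hx, hAx⟩ := hμ.1
  have hquad : 0 < μ * (x ⬝ᵥ x) := by simpa [hAx] using hA.dotProduct_mulVec_pos hx
  exact pos_of_mul_pos_left hquad (by simpa using dotProduct_star_self_nonneg x)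

end IsMinEigenvalue

theorem lambda_min_exponential_lower_bound_general {n : ℕ} {s : Set ℝ} (hs : Convex ℝ s)
    {g h : ℝ → Matrix (Fin n) (Fin n) ℝ}
    (hODE : ∀ t ∈ s, ∀ i j, HasDerivWithinAt (fun u ↦ g u i j) (2 * h t i j) s t) {c : ℝ}
    (hhg : ∀ t ∈ s, ∀ x : Fin n → ℝ, c * (g t *ᵥ x ⬝ᵥ x) ≤ h t *ᵥ x ⬝ᵥ x)
    {a r : ℝ} (ha : a ∈ s) (hr : r ∈ s) (har : a ≤ r) (hga : (g a).IsHermitian)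
    {μ ν : ℝ} (hμ : IsMinEigenvalue (g a) μ) (hν : IsMinEigenvalue (g r) ν) :
    μ * Real.exp (2 * c * (r - a)) ≤ ν := by
  obtain ⟨x, hx, hgx⟩ := hν.1
  have hxx : 0 < x ⬝ᵥ x := by simpa using dotProduct_star_self_pos_iff.2 hx
  refine le_of_mul_le_mul_right ?_ hxx
  calc
    μ * Real.exp (2 * c * (r - a)) * (x ⬝ᵥ x)
      = μ * (x ⬝ᵥ x) * Real.exp (2 * c * (r - a)) := mul_right_comm _ _ _
    _ ≤ (g a *ᵥ x ⬝ᵥ x) * Real.exp (2 * c * (r - a)) := by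
      gcongr
      exact hμ.mul_dotProduct_self_le_mulVec_dotProduct hga x
    _ ≤ g r *ᵥ x ⬝ᵥ x :=
      mulVec_dotProduct_mul_exp_le hs hODE (fun t ht ↦ hhg t ht x) ha hr har
    _ = ν * (x ⬝ᵥ x) := by rw [hgx, smul_dotProduct, smul_eq_mul]

/-- **Exponential lower bound for the metric coefficients (nondegeneracy).**
Let `g, h : [a,b) → Mat(n×n,ℝ)` with `g(r)` symmetric positive definite and
`h(r)` symmetric, `g` with `C¹` entries satisfying `g' = 2h` on `[a,b)`, and
assume `⟨h(r)x, x⟩ ≥ c⟨g(r)x, x⟩` for all `r` and `x`. Then the smallest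
eigenvalue `λ_min` of `g` satisfies `λ_min(r) ≥ λ_min(a) e^{2c(r-a)} > 0` on
`[a,b)`: the metric coefficients stay nondegenerate. -/
theorem lambda_min_exponential_lower_bound {n : ℕ} (a b : ℝ) (hab : a < b)
    (g h : ℝ → Matrix (Fin n) (Fin n) ℝ)
    (hgpos : ∀ r ∈ Ico a b, (g r).PosDef)
    (hhsym : ∀ r ∈ Ico a b, (h r).IsSymm)
    (hC1 : ∀ i j, ContDiffOn ℝ 1 (fun r => g r i j) (Ico a b))
    (hODE : ∀ r ∈ Ico a b, ∀ i j,
      HasDerivWithinAt (fun s => g s i j) (2 * h r i j) (Ico a b) r)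
    (c : ℝ)
    (hhg : ∀ r ∈ Ico a b, ∀ x : Fin n → ℝ,
      c * ((g r).mulVec x ⬝ᵥ x) ≤ (h r).mulVec x ⬝ᵥ x)
    (lmin : ℝ → ℝ)
    (hl : ∀ r ∈ Ico a b, IsMinEigenvalue (g r) (lmin r)) :
    ∀ r ∈ Ico a b,
      lmin a * Real.exp (2 * c * (r - a)) ≤ lmin r ∧
      0 < lmin a * Real.exp (2 * c * (r - a)) := by
  intro r hr
  have ha : a ∈ Ico a b := left_mem_Ico.2 hab
  exact ⟨lambda_min_exponential_lower_bound_general (convex_Ico a b) hODE hhg ha hr hr.1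
      (hgpos a ha).isHermitian (hl a ha) (hl r hr),
    mul_pos ((hl a ha).pos (hgpos a ha)) (Real.exp_pos _)⟩
end

section
/- Let b > 0 and let f, g : (0,b) → ℝ be measurable functions with f(t) > 0 and g(t) > 0 for every t ∈ (0,b), both integrable on (0,r) for every r ∈ (0,b), and such that the ratio t ↦ f(t)/g(t) is nonincreasing on (0,b). Then the function r ↦ (∫₀^r f(t) dt) / (∫₀^r g(t) dt) is nonincreasing on (0,b). -/
open Set Filter Topology MeasureTheory

/-!
For `r ≤ s` the value `c = f r / g r` separates the two pieces of `(a, s)`: the ratio `f / g` is at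
least `c` on `(a, r)` and at most `c` on `[r, s)`. Integrating, `∫ f ≥ c * ∫ g` on the first piece
and `∫ f ≤ c * ∫ g` on the second, so adjoining the second piece can only lower the ratio of the
integrals, by the mediant inequality.
-/

theorem add_div_add_le_div_of_mul_le_mul {K : Type*} [Field K] [LinearOrder K]
    [IsStrictOrderedRing K] {p q u v : K} (hq : 0 < q) (hv : 0 ≤ v) (h : u * q ≤ p * v) :
    (p + u) / (q + v) ≤ p / q := by
  rw [div_le_div_iff₀ (add_pos_of_pos_of_nonneg hq hv) hq]
  calc (p + u) * q = p * q + u * q := add_mul p u q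
    _ ≤ p * q + p * v := by gcongr
    _ = p * (q + v) := (mul_add p q v).symm

section SetIntegral

variable {X : Type*} [MeasurableSpace X] {μ : Measure X} {s t : Set X} {f g : X → ℝ} {c : ℝ}

theorem setIntegral_pos_of_forall_pos (hs : MeasurableSet s) (hμs : 0 < μ s)
    (hg : IntegrableOn g s μ) (hpos : ∀ x ∈ s, 0 < g x) : 0 < ∫ x in s, g x ∂μ := by
  have hnonneg : 0 ≤ᵐ[μ.restrict s] g := ae_restrict_of_forall_mem hs fun x hx ↦ (hpos x hx).le
  have hsupport : s ⊆ Function.support g := fun x hx ↦ (hpos x hx).ne'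
  rwa [setIntegral_pos_iff_support_of_nonneg_ae hnonneg hg, inter_eq_right.2 hsupport]

theorem setIntegral_le_mul_setIntegral_of_div_le (hs : MeasurableSet s)
    (hf : IntegrableOn f s μ) (hg : IntegrableOn g s μ) (hpos : ∀ x ∈ s, 0 < g x)
    (h : ∀ x ∈ s, f x / g x ≤ c) : ∫ x in s, f x ∂μ ≤ c * ∫ x in s, g x ∂μ := by
  rw [← integral_const_mul]
  exact setIntegral_mono_on hf (hg.const_mul c) hs
    fun x hx ↦ (div_le_iff₀ (hpos x hx)).1 (h x hx)

theorem mul_setIntegral_le_setIntegral_of_le_div (hs : MeasurableSet s)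
    (hf : IntegrableOn f s μ) (hg : IntegrableOn g s μ) (hpos : ∀ x ∈ s, 0 < g x)
    (h : ∀ x ∈ s, c ≤ f x / g x) : c * ∫ x in s, g x ∂μ ≤ ∫ x in s, f x ∂μ := by
  rw [← integral_const_mul]
  exact setIntegral_mono_on (hg.const_mul c) hf hs
    fun x hx ↦ (le_div_iff₀ (hpos x hx)).1 (h x hx)

theorem setIntegral_union_div_le (hs : MeasurableSet s) (ht : MeasurableSet t)
    (hst : Disjoint s t) (hμs : 0 < μ s)
    (hf : IntegrableOn f (s ∪ t) μ) (hg : IntegrableOn g (s ∪ t) μ) (hpos : ∀ x ∈ s ∪ t, 0 < g x)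
    (hs_ratio : ∀ x ∈ s, c ≤ f x / g x) (ht_ratio : ∀ x ∈ t, f x / g x ≤ c) :
    (∫ x in s ∪ t, f x ∂μ) / (∫ x in s ∪ t, g x ∂μ) ≤
      (∫ x in s, f x ∂μ) / (∫ x in s, g x ∂μ) := by
  obtain ⟨hfs, hft⟩ := integrableOn_union.1 hf
  obtain ⟨hgs, hgt⟩ := integrableOn_union.1 hg
  have hpos_s : ∀ x ∈ s, 0 < g x := fun x hx ↦ hpos x (.inl hx)
  have hpos_t : ∀ x ∈ t, 0 < g x := fun x hx ↦ hpos x (.inr hx)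
  have hGs : 0 < ∫ x in s, g x ∂μ := setIntegral_pos_of_forall_pos hs hμs hgs hpos_s
  have hGt : 0 ≤ ∫ x in t, g x ∂μ := setIntegral_nonneg ht fun x hx ↦ (hpos_t x hx).le
  rw [setIntegral_union hst ht hfs hft, setIntegral_union hst ht hgs hgt]
  refine add_div_add_le_div_of_mul_le_mul hGs hGt ?_
  calc (∫ x in t, f x ∂μ) * ∫ x in s, g x ∂μ
      ≤ (c * ∫ x in t, g x ∂μ) * ∫ x in s, g x ∂μ := by
        gcongr
        exact setIntegral_le_mul_setIntegral_of_div_le ht hft hgt hpos_t ht_ratio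
    _ = (c * ∫ x in s, g x ∂μ) * ∫ x in t, g x ∂μ := mul_right_comm ..
    _ ≤ (∫ x in s, f x ∂μ) * ∫ x in t, g x ∂μ := by
        gcongr
        exact mul_setIntegral_le_setIntegral_of_le_div hs hfs hgs hpos_s hs_ratio

end SetIntegral

theorem integral_ratio_antitone_general {α : Type*} [LinearOrder α] [TopologicalSpace α]
    [OrderClosedTopology α] [MeasurableSpace α] [OpensMeasurableSpace α] {μ : Measure α} {a b : α}
    {f g : α → ℝ} (hμ : ∀ r ∈ Ioo a b, 0 < μ (Ioo a r)) (hgpos : ∀ t ∈ Ioo a b, 0 < g t)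
    (hfint : ∀ r ∈ Ioo a b, IntegrableOn f (Ioo a r) μ)
    (hgint : ∀ r ∈ Ioo a b, IntegrableOn g (Ioo a r) μ)
    (hratio : AntitoneOn (fun t ↦ f t / g t) (Ioo a b)) :
    AntitoneOn (fun r ↦ (∫ t in Ioo a r, f t ∂μ) / (∫ t in Ioo a r, g t ∂μ)) (Ioo a b) := by
  intro r hr s hs hrs
  have hsplit : Ioo a r ∪ Ico r s = Ioo a s := Ioo_union_Ico_eq_Ioo hr.1 hrs
  have hsub : Ioo a r ∪ Ico r s ⊆ Ioo a b := hsplit ▸ Ioo_subset_Ioo_right hs.2.le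
  have hdisj : Disjoint (Ioo a r) (Ico r s) :=
    (Iio_disjoint_Ici le_rfl).mono Ioo_subset_Iio_self Ico_subset_Ici_self
  have hbefore : ∀ t ∈ Ioo a r, f r / g r ≤ f t / g t :=
    fun t ht ↦ hratio (hsub (.inl ht)) hr ht.2.le
  have hafter : ∀ t ∈ Ico r s, f t / g t ≤ f r / g r :=
    fun t ht ↦ hratio hr (hsub (.inr ht)) ht.1
  have hle := setIntegral_union_div_le measurableSet_Ioo measurableSet_Ico hdisj (hμ r hr)
    (hsplit ▸ hfint s hs) (hsplit ▸ hgint s hs) (fun t ht ↦ hgpos t (hsub ht)) hbefore hafter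
  rwa [hsplit] at hle

/-- **Ratio-monotonicity lemma for integrals (Bishop–Gromov step).** If
`f, g : (0,b) → ℝ` are measurable, positive, integrable on `(0,r)` for every
`r ∈ (0,b)`, and the ratio `f/g` is nonincreasing on `(0,b)`, then
`r ↦ (∫₀^r f) / (∫₀^r g)` is nonincreasing on `(0,b)`. -/
theorem integral_ratio_antitone
    (b : ℝ) (hb : 0 < b)
    (f g : ℝ → ℝ)
    (hfm : AEMeasurable f ((volume : Measure ℝ).restrict (Ioo 0 b)))
    (hgm : AEMeasurable g ((volume : Measure ℝ).restrict (Ioo 0 b)))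
    (hfpos : ∀ t ∈ Ioo (0:ℝ) b, 0 < f t)
    (hgpos : ∀ t ∈ Ioo (0:ℝ) b, 0 < g t)
    (hfint : ∀ r ∈ Ioo (0:ℝ) b, IntegrableOn f (Ioo 0 r))
    (hgint : ∀ r ∈ Ioo (0:ℝ) b, IntegrableOn g (Ioo 0 r))
    (hratio : AntitoneOn (fun t => f t / g t) (Ioo (0:ℝ) b)) :
    AntitoneOn (fun r => (∫ t in Ioo (0:ℝ) r, f t) / (∫ t in Ioo (0:ℝ) r, g t))
      (Ioo (0:ℝ) b) := by
  exact integral_ratio_antitone_general (fun r hr ↦ by simpa using hr.1) hgpos hfint hgint hratio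
end
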